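/- arXiv:1412.7976 — 2 statements merged into one kernel-verified Lean document; each statement's English description precedes it below -/
import Mathlib

section
/- Let N ≥ 2, let Ω ⊂ ℝ^N be an open set, let A₀ ≥ 0, and let u : Ω → ℝ be locally Lipschitz. Suppose that u is twice continuously differentiable with Δu = 0 on the open set {x ∈ Ω : u(x) < 1}, and that −Δu ≤ A₀ holds in the distributional sense on Ω, i.e. for every nonnegative smooth compactly supported φ : Ω → ℝ one has −∫_Ω u Δφ dx ≤ A₀ ∫_Ω φ dx. Then u is harmonic on the interior of the set {x ∈ Ω : u(x) ≤ 1}: on that open set u is smooth and Δu = 0. -/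
open MeasureTheory Metric Set

/-- The Laplacian: sum of second partial derivatives. -/
noncomputable def lap {N : ℕ} (u : EuclideanSpace ℝ (Fin N) → ℝ)
    (x : EuclideanSpace ℝ (Fin N)) : ℝ :=
  ∑ i : Fin N, fderiv ℝ (fun y => fderiv ℝ u y (EuclideanSpace.single i 1)) x
    (EuclideanSpace.single i 1)

/-!
Put `w = 1 - u`. On the interior of `{u ≤ 1}` this is a nonnegative continuous function which is
harmonic where it is positive and satisfies `Δw ≤ A₀` in the sense of distributions; the point is
that no mass of `Δw` sits on the zero set.

The distributional bound gives a one-sided mean value inequality, so the averages of `w` over balls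
of radius `d` centred at a zero of `w` are `O(d²)`. A positive point at distance `d` from the zero
set is the centre of a ball of radius `d` on which `w` is harmonic, and comparing with the average
at the nearest zero yields `w = O(d²)` there. Together with the gradient estimate
`‖∇w‖ ≤ C w / d` this gives `‖∇w‖² ≤ K w` locally. Cutting `w` off at a small height `ε` by a
smooth function `b_ε`, we have `Δ(b_ε ∘ w) = b_ε''(w) ‖∇w‖²`, which is bounded because
`t b_ε''(t)` is bounded uniformly in `ε`, and which is supported in `{ε ≤ w ≤ 2ε}`. Letting
`ε → 0` shows that `w` is harmonic in the sense of distributions, and Weyl's lemma concludes.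
-/

open Filter InnerProductSpace Laplacian Module Topology
open scoped ContDiff

variable {E : Type*} [NormedAddCommGroup E]

section Laplacian

variable [InnerProductSpace ℝ E] [FiniteDimensional ℝ E] {f : E → ℝ} {x : E}

theorem laplacian_eq_sum_fderiv_fderiv {ι : Type*} [Fintype ι] (v : OrthonormalBasis ι ℝ E)
    (hf : ContDiffAt ℝ 2 f x) :
    Δ f x = ∑ i, fderiv ℝ (fun y => fderiv ℝ f y (v i)) x (v i) := by
  have hdf : DifferentiableAt ℝ (fderiv ℝ f) x :=
    (hf.fderiv_right (m := 1) le_rfl).differentiableAt one_ne_zero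
  simp [laplacian_eq_iteratedFDeriv_orthonormalBasis f v, iteratedFDeriv_two_apply,
    fderiv_clm_apply hdf]

theorem lap_eq_laplacian {N : ℕ} {u : EuclideanSpace ℝ (Fin N) → ℝ}
    {x : EuclideanSpace ℝ (Fin N)} (hu : ContDiffAt ℝ 2 u x) : lap u x = Δ u x := by
  simp [lap, laplacian_eq_sum_fderiv_fderiv (EuclideanSpace.basisFun (Fin N) ℝ) hu]

theorem continuousAt_laplacian (hf : ContDiffAt ℝ 2 f x) : ContinuousAt (Δ f) x := by
  rw [laplacian_eq_iteratedFDeriv_stdOrthonormalBasis]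
  exact tendsto_finsetSum _ fun i _ =>
    (hf.continuousAt_iteratedFDeriv le_rfl).eval_const _

theorem tsupport_laplacian_subset (f : E → ℝ) : tsupport (Δ f) ⊆ tsupport f := by
  refine closure_minimal (fun x hx => ?_) (isClosed_tsupport f)
  contrapose hx
  have h0 : Δ f x = Δ (fun _ : E => (0 : ℝ)) x :=
    (laplacian_congr_nhds (notMem_tsupport_iff_eventuallyEq.mp hx)).self_of_nhds
  simpa using h0

theorem laplacian_comp {b : ℝ → ℝ} (hb : ContDiffAt ℝ 2 b (f x)) (hf : ContDiffAt ℝ 2 f x) :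
    Δ (b ∘ f) x =
      deriv (deriv b) (f x) * ‖fderiv ℝ f x‖ ^ 2 + deriv b (f x) * Δ f x := by
  set v := stdOrthonormalBasis ℝ E
  have hfirst : ∀ᶠ y in 𝓝 x, fderiv ℝ (b ∘ f) y = deriv b (f y) • fderiv ℝ f y := by
    filter_upwards [hf.eventually (by simp), hf.continuousAt.eventually (hb.eventually (by simp))]
      with y hfy hby
    exact ((hby.differentiableAt two_ne_zero).hasDerivAt.comp_hasFDerivAt y
      (hfy.differentiableAt two_ne_zero).hasFDerivAt).fderiv
  have hdf : DifferentiableAt ℝ (fderiv ℝ f) x :=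
    (hf.fderiv_right (m := 1) le_rfl).differentiableAt one_ne_zero
  have hdb : DifferentiableAt ℝ (deriv b) (f x) :=
    (hb.derivWithin (m := 1) le_rfl).differentiableAt one_ne_zero
  have hsecond (i) : fderiv ℝ (fun y => fderiv ℝ (b ∘ f) y (v i)) x (v i) =
      deriv (deriv b) (f x) * fderiv ℝ f x (v i) ^ 2 +
        deriv b (f x) * fderiv ℝ (fun y => fderiv ℝ f y (v i)) x (v i) := by
    have heq : (fun y => fderiv ℝ (b ∘ f) y (v i)) =ᶠ[𝓝 x]
        fun y => deriv b (f y) * fderiv ℝ f y (v i) := by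
      filter_upwards [hfirst] with y hy using by simp [hy]
    have hprod : HasFDerivAt (fun y => deriv b (f y) * fderiv ℝ f y (v i)) _ x :=
      (hdb.hasDerivAt.comp_hasFDerivAt x (hf.differentiableAt two_ne_zero).hasFDerivAt).mul
        (hdf.clm_apply (differentiableAt_const (v i))).hasFDerivAt
    rw [heq.fderiv_eq, hprod.fderiv]
    simp only [Function.comp_apply, add_apply, smul_apply, smul_eq_mul]
    ring
  rw [laplacian_eq_sum_fderiv_fderiv v (hb.comp x hf), laplacian_eq_sum_fderiv_fderiv v hf,
    v.norm_dual]
  simp only [hsecond, Finset.sum_add_distrib, Finset.mul_sum]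

theorem laplacian_comp_smul_sub (hf : ContDiff ℝ 2 f) (c : ℝ) (x y : E) :
    Δ (fun y => f (c • (x - y))) y = c ^ 2 * Δ f (c • (x - y)) := by
  set v := stdOrthonormalBasis ℝ E
  have chain {g : E → ℝ} (hg : Differentiable ℝ g) (y e : E) :
      fderiv ℝ (fun y => g (c • (x - y))) y e = -c * fderiv ℝ g (c • (x - y)) e := by
    have haff : HasFDerivAt (fun y => c • (x - y)) (c • -ContinuousLinearMap.id ℝ E) y :=
      ((hasFDerivAt_id y).const_sub x).const_smul c
    have hcomp : HasFDerivAt (fun y => g (c • (x - y))) _ y := (hg _).hasFDerivAt.comp y haff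
    simp [hcomp.fderiv]
  have hdf (e : E) : Differentiable ℝ fun z => fderiv ℝ f z e :=
    ((hf.fderiv_right (m := 1) le_rfl).differentiable one_ne_zero).clm_apply
      (differentiable_const e)
  rw [laplacian_eq_sum_fderiv_fderiv v (by fun_prop),
    laplacian_eq_sum_fderiv_fderiv v hf.contDiffAt, Finset.mul_sum]
  simp only [chain (hf.differentiable two_ne_zero)]
  refine Finset.sum_congr rfl fun i _ => ?_
  rw [fderiv_const_mul (by fun_prop), smul_apply, chain (hdf _), smul_eq_mul]
  ring

theorem laplacian_of_fderiv_eq_neg_smul_innerSL {k : E → ℝ} (hf : ContDiff ℝ 2 f)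
    (hk : Differentiable ℝ k) (hfk : ∀ z, fderiv ℝ f z = -(k z • innerSL ℝ z)) (z : E) :
    Δ f z = -(finrank ℝ E * k z + fderiv ℝ k z z) := by
  set v := stdOrthonormalBasis ℝ E
  have hterm (i) : fderiv ℝ (fun y => fderiv ℝ f y (v i)) z (v i) =
      -(k z + fderiv ℝ k z (inner ℝ (v i) z • v i)) := by
    have heq : (fun y => fderiv ℝ f y (v i)) = -fun y => k y * innerSL ℝ (v i) y := by
      ext y; simp [hfk, real_inner_comm]
    rw [heq, fderiv_neg, fderiv_fun_mul (hk z) (innerSL ℝ (v i)).differentiableAt,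
      ContinuousLinearMap.fderiv]
    simp
  rw [laplacian_eq_sum_fderiv_fderiv v hf.contDiffAt]
  simp only [hterm, Finset.sum_neg_distrib, Finset.sum_add_distrib, ← map_sum, v.sum_repr']
  simp

end Laplacian
section IntegrationByParts

variable [InnerProductSpace ℝ E] [FiniteDimensional ℝ E] [MeasurableSpace E] [BorelSpace E]
  {V : Set E} {f φ : E → ℝ}

theorem integrable_mul_of_continuousOn (hV : IsOpen V) (hf : ContinuousOn f V) (hφ : Continuous φ)
    (hφc : HasCompactSupport φ) (hφV : tsupport φ ⊆ V) : Integrable fun x => f x * φ x := by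
  have hcont : Continuous fun x => f x * φ x := continuous_of_tsupport fun x hx =>
    (hf.continuousAt (hV.mem_nhds (hφV (tsupport_mul_subset_right hx)))).mul hφ.continuousAt
  exact hcont.integrable_of_hasCompactSupport hφc.mul_left

theorem integral_mul_fderiv_eq_neg (hV : IsOpen V) (hf : ContDiffOn ℝ 1 f V)
    (hφ : ContDiff ℝ 1 φ) (hφc : HasCompactSupport φ) (hφV : tsupport φ ⊆ V) (v : E) :
    ∫ x, f x * fderiv ℝ φ x v = -∫ x, fderiv ℝ f x v * φ x := by
  have hf' : ContinuousOn (fun x => fderiv ℝ f x v) V :=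
    (hf.continuousOn_fderiv_of_isOpen hV le_rfl).clm_apply continuousOn_const
  have hφ' : Continuous fun x => fderiv ℝ φ x v :=
    (hφ.continuous_fderiv one_ne_zero).clm_apply continuous_const
  refine integral_mul_fderiv_eq_neg_fderiv_mul_of_integrable
    (integrable_mul_of_continuousOn hV hf' hφ.continuous hφc hφV)
    (integrable_mul_of_continuousOn hV hf.continuousOn hφ' (hφc.fderiv_apply ℝ v)
      ((tsupport_fderiv_apply_subset ℝ v).trans hφV))
    (integrable_mul_of_continuousOn hV hf.continuousOn hφ.continuous hφc hφV)
    (fun x hx => ?_) fun x _ => hφ.differentiable one_ne_zero x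
  exact (hf.contDiffAt (hV.mem_nhds (hφV hx))).differentiableAt one_ne_zero

theorem integral_mul_laplacian_eq (hV : IsOpen V) (hf : ContDiffOn ℝ 2 f V)
    (hφ : ContDiff ℝ 2 φ) (hφc : HasCompactSupport φ) (hφV : tsupport φ ⊆ V) :
    ∫ x, f x * Δ φ x = ∫ x, Δ f x * φ x := by
  set v := stdOrthonormalBasis ℝ E
  have hf₁ (i) : ContDiffOn ℝ 1 (fun x => fderiv ℝ f x (v i)) V :=
    (hf.fderiv_of_isOpen hV le_rfl).clm_apply contDiffOn_const
  have hf₂ (i) : ContinuousOn (fun x => fderiv ℝ (fun y => fderiv ℝ f y (v i)) x (v i)) V :=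
    ((hf₁ i).continuousOn_fderiv_of_isOpen hV le_rfl).clm_apply continuousOn_const
  have hφ₁ (i) : ContDiff ℝ 1 fun x => fderiv ℝ φ x (v i) :=
    (hφ.fderiv_right le_rfl).clm_apply contDiff_const
  have hφ₂ (i) : Continuous fun x => fderiv ℝ (fun y => fderiv ℝ φ y (v i)) x (v i) :=
    ((hφ₁ i).continuous_fderiv one_ne_zero).clm_apply continuous_const
  have hφc₁ (i) : HasCompactSupport fun x => fderiv ℝ φ x (v i) := hφc.fderiv_apply ℝ (v i)
  have hφV₁ (i) : tsupport (fun x => fderiv ℝ φ x (v i)) ⊆ V :=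
    (tsupport_fderiv_apply_subset ℝ (v i)).trans hφV
  have hlap : ∀ x, Δ f x * φ x =
      ∑ i, fderiv ℝ (fun y => fderiv ℝ f y (v i)) x (v i) * φ x := fun x => by
    by_cases hx : x ∈ tsupport φ
    · rw [laplacian_eq_sum_fderiv_fderiv v (hf.contDiffAt (hV.mem_nhds (hφV hx))), Finset.sum_mul]
    · simp [image_eq_zero_of_notMem_tsupport hx]
  simp only [hlap, laplacian_eq_sum_fderiv_fderiv v hφ.contDiffAt, Finset.mul_sum]
  rw [integral_finsetSum _ fun i _ => integrable_mul_of_continuousOn hV hf.continuousOn (hφ₂ i)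
      ((hφc₁ i).fderiv_apply ℝ (v i)) ((tsupport_fderiv_apply_subset ℝ (v i)).trans (hφV₁ i)),
    integral_finsetSum _ fun i _ => integrable_mul_of_continuousOn hV (hf₂ i) hφ.continuous hφc hφV]
  refine Finset.sum_congr rfl fun i _ => ?_
  rw [integral_mul_fderiv_eq_neg hV (hf.of_le one_le_two) (hφ₁ i) (hφc₁ i) (hφV₁ i),
    integral_mul_fderiv_eq_neg hV (hf₁ i) (hφ.of_le one_le_two) hφc hφV, neg_neg]

end IntegrationByParts

section Distributions

variable [InnerProductSpace ℝ E]

/-- `φ` is a test function on `V`: smooth on the whole space, with compact support inside `V`. -/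
structure IsTestFunction (φ : E → ℝ) (V : Set E) : Prop where
  contDiff : ContDiff ℝ ∞ φ
  hasCompactSupport : HasCompactSupport φ
  tsupport_subset : tsupport φ ⊆ V

variable {V W : Set E} {φ : E → ℝ}

namespace IsTestFunction

theorem mono (hφ : IsTestFunction φ V) (hVW : V ⊆ W) : IsTestFunction φ W :=
  ⟨hφ.contDiff, hφ.hasCompactSupport, hφ.tsupport_subset.trans hVW⟩

theorem eq_zero_of_notMem (hφ : IsTestFunction φ V) {x : E} (hx : x ∉ V) : φ x = 0 :=
  image_eq_zero_of_notMem_tsupport fun h => hx (hφ.tsupport_subset h)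

theorem contDiff_two (hφ : IsTestFunction φ V) : ContDiff ℝ 2 φ :=
  hφ.contDiff.of_le (WithTop.coe_le_coe.mpr le_top)

variable [FiniteDimensional ℝ E]

theorem continuous_laplacian (hφ : IsTestFunction φ V) : Continuous (Δ φ) :=
  continuous_iff_continuousAt.mpr fun _ => continuousAt_laplacian hφ.contDiff_two.contDiffAt

theorem tsupport_laplacian_subset (hφ : IsTestFunction φ V) : tsupport (Δ φ) ⊆ V :=
  (_root_.tsupport_laplacian_subset φ).trans hφ.tsupport_subset

theorem laplacian_eq_zero_of_notMem (hφ : IsTestFunction φ V) {x : E} (hx : x ∉ V) : Δ φ x = 0 :=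
  image_eq_zero_of_notMem_tsupport fun h => hx (hφ.tsupport_laplacian_subset h)

theorem hasCompactSupport_laplacian (hφ : IsTestFunction φ V) : HasCompactSupport (Δ φ) :=
  hφ.hasCompactSupport.of_isClosed_subset (isClosed_tsupport _)
    (_root_.tsupport_laplacian_subset φ)

variable [MeasurableSpace E] [BorelSpace E] {w : E → ℝ}

theorem integrable_mul (hφ : IsTestFunction φ V) (hV : IsOpen V) (hw : ContinuousOn w V) :
    Integrable fun x => w x * φ x :=
  integrable_mul_of_continuousOn hV hw hφ.contDiff.continuous hφ.hasCompactSupport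
    hφ.tsupport_subset

theorem integrable_mul_laplacian (hφ : IsTestFunction φ V) (hV : IsOpen V)
    (hw : ContinuousOn w V) : Integrable fun x => w x * Δ φ x :=
  integrable_mul_of_continuousOn hV hw hφ.continuous_laplacian hφ.hasCompactSupport_laplacian
    hφ.tsupport_laplacian_subset

theorem integral_mul_laplacian_congr {w' : E → ℝ} (hφ : IsTestFunction φ V) (h : EqOn w w' V) :
    ∫ x, w x * Δ φ x = ∫ x, w' x * Δ φ x := by
  refine integral_congr_ae (.of_forall fun x => ?_)
  by_cases hx : x ∈ V
  · simp only [h hx]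
  · simp only [hφ.laplacian_eq_zero_of_notMem hx, mul_zero]

end IsTestFunction

variable [FiniteDimensional ℝ E] [MeasurableSpace E] [BorelSpace E] {w w' : E → ℝ} {A B : ℝ}

/-- The inequality `Δw ≤ A` on `V` in the sense of distributions. A test function vanishes off `V`,
so integrating over the whole space is the same as integrating over `V`. -/
def DistribLaplacianLE (w : E → ℝ) (A : ℝ) (V : Set E) : Prop :=
  ∀ φ, IsTestFunction φ V → (∀ x, 0 ≤ φ x) → ∫ x, w x * Δ φ x ≤ A * ∫ x, φ x

/-- The equation `Δw = 0` on `V` in the sense of distributions. -/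
def DistribHarmonic (w : E → ℝ) (V : Set E) : Prop :=
  ∀ φ, IsTestFunction φ V → ∫ x, w x * Δ φ x = 0

theorem DistribLaplacianLE.mono (hw : DistribLaplacianLE w A V) (hAB : A ≤ B) (hWV : W ⊆ V) :
    DistribLaplacianLE w B W := fun φ hφ hφ0 =>
  (hw φ (hφ.mono hWV) hφ0).trans (mul_le_mul_of_nonneg_right hAB (integral_nonneg hφ0))

theorem DistribLaplacianLE.congr (hw : DistribLaplacianLE w A V) (h : EqOn w w' V) :
    DistribLaplacianLE w' A V := fun φ hφ hφ0 =>
  (hφ.integral_mul_laplacian_congr h).symm.trans_le (hw φ hφ hφ0)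

theorem DistribHarmonic.congr (hw : DistribHarmonic w V) (h : EqOn w w' V) :
    DistribHarmonic w' V := fun φ hφ =>
  (hφ.integral_mul_laplacian_congr h).symm.trans (hw φ hφ)

theorem DistribHarmonic.mono (hw : DistribHarmonic w V) (hWV : W ⊆ V) : DistribHarmonic w W :=
  fun φ hφ => hw φ (hφ.mono hWV)

theorem DistribHarmonic.distribLaplacianLE (hw : DistribHarmonic w V) :
    DistribLaplacianLE w 0 V := fun φ hφ _ => by simp [hw φ hφ]

theorem DistribHarmonic.neg (hw : DistribHarmonic w V) : DistribHarmonic (-w) V := fun φ hφ => by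
  simp [integral_neg, hw φ hφ]

theorem distribHarmonic_of_harmonicOnNhd (hV : IsOpen V) (hw : HarmonicOnNhd w V) :
    DistribHarmonic w V := fun φ hφ => by
  rw [integral_mul_laplacian_eq hV hw.contDiffOn hφ.contDiff_two hφ.hasCompactSupport
    hφ.tsupport_subset]
  refine integral_eq_zero_of_ae (.of_forall fun x => ?_)
  by_cases hx : x ∈ V
  · simp [(hw x hx).2.self_of_nhds]
  · simp [hφ.eq_zero_of_notMem hx]

theorem integral_laplacian_eq_zero (hφ : IsTestFunction φ V) : ∫ x, Δ φ x = 0 := by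
  simpa using (distribHarmonic_of_harmonicOnNhd isOpen_univ
    fun x _ => harmonicAt_const (x := x) (1 : ℝ)) φ (hφ.mono (subset_univ V))

theorem DistribLaplacianLE.const_add (hw : DistribLaplacianLE w A V) (hV : IsOpen V)
    (hwV : ContinuousOn w V) (c : ℝ) : DistribLaplacianLE (fun x => c + w x) A V :=
  fun φ hφ hφ0 => by
  simp only [add_mul]
  rw [integral_add (hφ.integrable_mul_laplacian hV continuousOn_const)
    (hφ.integrable_mul_laplacian hV hwV), integral_const_mul, integral_laplacian_eq_zero hφ,
    mul_zero, zero_add]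
  exact hw φ hφ hφ0

end Distributions
section RadialKernel

/-- The radial smooth bump `exp (-1 / (1 - ‖z‖²))`, cut off outside the unit ball. -/
noncomputable def radialBump (z : E) : ℝ := expNegInvGlue (1 - ‖z‖ ^ 2)

/-- The radial density `k` for which `∇ radialBump z = -k z • z`; the bump is built from
`expNegInvGlue` because its derivative is again explicit, smooth and nonnegative. -/
noncomputable def radialDensity (z : E) : ℝ :=
  2 * ((1 - ‖z‖ ^ 2)⁻¹ ^ 2 * expNegInvGlue (1 - ‖z‖ ^ 2))

theorem one_sub_norm_sq_nonpos {z : E} (hz : 1 ≤ ‖z‖) : 1 - ‖z‖ ^ 2 ≤ 0 :=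
  sub_nonpos.mpr (one_le_pow₀ hz)

theorem one_sub_norm_sq_pos {z : E} (hz : ‖z‖ < 1) : 0 < 1 - ‖z‖ ^ 2 :=
  sub_pos.mpr (pow_lt_one₀ (norm_nonneg z) hz two_ne_zero)

theorem radialBump_nonneg (z : E) : 0 ≤ radialBump z := expNegInvGlue.nonneg _

theorem radialBump_eq_zero {z : E} (hz : 1 ≤ ‖z‖) : radialBump z = 0 :=
  expNegInvGlue.zero_of_nonpos (one_sub_norm_sq_nonpos hz)

theorem radialDensity_nonneg (z : E) : 0 ≤ radialDensity z :=
  mul_nonneg zero_le_two (mul_nonneg (sq_nonneg _) (expNegInvGlue.nonneg _))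

theorem radialDensity_pos {z : E} (hz : ‖z‖ < 1) : 0 < radialDensity z := by
  have hpos := one_sub_norm_sq_pos hz
  have := expNegInvGlue.pos_of_pos hpos
  unfold radialDensity
  positivity

theorem radialDensity_eq_zero {z : E} (hz : 1 ≤ ‖z‖) : radialDensity z = 0 := by
  simp [radialDensity, expNegInvGlue.zero_of_nonpos (one_sub_norm_sq_nonpos hz)]

theorem hasCompactSupport_of_eq_zero_of_one_le_norm [ProperSpace E] {F : Type*} [Zero F]
    {g : E → F} (hg : ∀ z, 1 ≤ ‖z‖ → g z = 0) : HasCompactSupport g :=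
  .intro (isCompact_closedBall 0 1) fun z hz => hg z (by
    simpa using (not_le.mp (mem_closedBall_zero_iff.not.mp hz)).le)

variable [InnerProductSpace ℝ E]

theorem contDiff_radialBump : ContDiff ℝ ∞ (radialBump (E := E)) :=
  expNegInvGlue.contDiff.comp (contDiff_const.sub (contDiff_norm_sq ℝ))

theorem contDiff_radialDensity : ContDiff ℝ ∞ (radialDensity (E := E)) := by
  have h := expNegInvGlue.contDiff_polynomial_eval_inv_mul (n := ⊤) (Polynomial.X ^ 2)
  simp only [Polynomial.eval_pow, Polynomial.eval_X] at h
  exact contDiff_const.mul (h.comp (contDiff_const.sub (contDiff_norm_sq ℝ)))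

theorem hasDerivAt_expNegInvGlue (t : ℝ) :
    HasDerivAt expNegInvGlue (t⁻¹ ^ 2 * expNegInvGlue t) t := by
  simpa using expNegInvGlue.hasDerivAt_polynomial_eval_inv_mul 1 t

theorem fderiv_radialBump (z : E) :
    fderiv ℝ radialBump z = -(radialDensity z • innerSL ℝ z) := by
  have hnorm : HasFDerivAt (fun z : E => 1 - ‖z‖ ^ 2) (-(2 • innerSL ℝ z)) z :=
    (hasStrictFDerivAt_norm_sq z).hasFDerivAt.const_sub 1
  have hcomp : HasFDerivAt radialBump _ z :=
    (hasDerivAt_expNegInvGlue _).comp_hasFDerivAt z hnorm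
  rw [hcomp.fderiv]
  ext v
  simp only [radialDensity, smul_apply, neg_apply, smul_eq_mul, nsmul_eq_mul]
  ring

theorem one_le_norm_inv_smul_iff {r : ℝ} (hr : 0 < r) {z : E} : 1 ≤ ‖r⁻¹ • z‖ ↔ r ≤ ‖z‖ := by
  rw [norm_smul, norm_inv, Real.norm_of_nonneg hr.le, inv_mul_eq_div, one_le_div hr]

variable [FiniteDimensional ℝ E]

theorem hasCompactSupport_radialDensity : HasCompactSupport (radialDensity (E := E)) :=
  hasCompactSupport_of_eq_zero_of_one_le_norm fun _ => radialDensity_eq_zero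

variable [MeasurableSpace E] [BorelSpace E]

theorem integral_radialDensity_pos : 0 < ∫ z : E, radialDensity z :=
  contDiff_radialDensity.continuous.integral_pos_of_hasCompactSupport_nonneg_nonzero
    hasCompactSupport_radialDensity radialDensity_nonneg
    (radialDensity_pos (by simp) : 0 < radialDensity (0 : E)).ne'

/-- The smooth radial probability density on the unit ball used as averaging kernel. -/
noncomputable def meanKernel (z : E) : ℝ := (∫ z : E, radialDensity z)⁻¹ * radialDensity z

/-- The smooth bump `ψ` with `∇ψ z = -meanKernel z • z`: it turns the scale derivative of averages
against `meanKernel` into pairings with a Laplacian. -/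
noncomputable def kernelPotential (z : E) : ℝ := (∫ z : E, radialDensity z)⁻¹ * radialBump z

theorem meanKernel_nonneg (z : E) : 0 ≤ meanKernel z :=
  mul_nonneg (inv_nonneg.mpr integral_radialDensity_pos.le) (radialDensity_nonneg z)

theorem meanKernel_eq_zero {z : E} (hz : 1 ≤ ‖z‖) : meanKernel z = 0 := by
  simp [meanKernel, radialDensity_eq_zero hz]

theorem contDiff_meanKernel : ContDiff ℝ ∞ (meanKernel (E := E)) :=
  contDiff_const.mul contDiff_radialDensity

theorem hasCompactSupport_meanKernel : HasCompactSupport (meanKernel (E := E)) :=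
  hasCompactSupport_of_eq_zero_of_one_le_norm fun _ => meanKernel_eq_zero

theorem integral_meanKernel : ∫ z : E, meanKernel z = 1 := by
  simp only [meanKernel, integral_const_mul]
  exact inv_mul_cancel₀ integral_radialDensity_pos.ne'

variable (E) in
theorem exists_pos_le_meanKernel {s : ℝ} (hs : s < 1) :
    ∃ c > 0, ∀ z : E, ‖z‖ ≤ s → c ≤ meanKernel z := by
  rcases (closedBall (0 : E) s).eq_empty_or_nonempty with hempty | hne
  · exact ⟨1, one_pos, fun z hz => absurd (mem_closedBall_zero_iff.mpr hz) (by simp [hempty])⟩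
  obtain ⟨z₀, hz₀, hmin⟩ := (isCompact_closedBall (0 : E) s).exists_isMinOn hne
    contDiff_meanKernel.continuous.continuousOn
  have hz₀' : ‖z₀‖ < 1 := (mem_closedBall_zero_iff.mp hz₀).trans_lt hs
  exact ⟨meanKernel z₀, mul_pos (inv_pos.mpr integral_radialDensity_pos) (radialDensity_pos hz₀'),
    fun z hz => hmin (mem_closedBall_zero_iff.mpr hz)⟩

theorem kernelPotential_nonneg (z : E) : 0 ≤ kernelPotential z :=
  mul_nonneg (inv_nonneg.mpr integral_radialDensity_pos.le) (radialBump_nonneg z)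

theorem isTestFunction_kernelPotential : IsTestFunction (kernelPotential (E := E)) univ where
  contDiff := contDiff_const.mul contDiff_radialBump
  hasCompactSupport := hasCompactSupport_of_eq_zero_of_one_le_norm fun z hz => by
    simp [kernelPotential, radialBump_eq_zero hz]
  tsupport_subset := subset_univ _

theorem fderiv_kernelPotential (z : E) :
    fderiv ℝ kernelPotential z = -(meanKernel z • innerSL ℝ z) := by
  have hdiff : DifferentiableAt ℝ (radialBump (E := E)) z :=
    contDiff_radialBump.differentiable (by simp) z
  have hmul : HasFDerivAt kernelPotential _ z := hdiff.hasFDerivAt.const_mul _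
  rw [hmul.fderiv, fderiv_radialBump, smul_neg, smul_smul, meanKernel]

theorem laplacian_kernelPotential (z : E) :
    Δ (kernelPotential : E → ℝ) z =
      -(finrank ℝ E * meanKernel z + fderiv ℝ meanKernel z z) :=
  laplacian_of_fderiv_eq_neg_smul_innerSL isTestFunction_kernelPotential.contDiff_two
    (contDiff_meanKernel.differentiable (by simp)) fderiv_kernelPotential z

/-- The kernel `meanKernel` rescaled to the ball of radius `r`, still with integral one. -/
noncomputable def scaledKernel (r : ℝ) (z : E) : ℝ :=
  (r ^ finrank ℝ E)⁻¹ * meanKernel (r⁻¹ • z)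

/-- The potential `kernelPotential` rescaled to the ball of centre `x` and radius `r`. -/
noncomputable def scaledPotential (x : E) (r : ℝ) (y : E) : ℝ := kernelPotential (r⁻¹ • (x - y))

variable {r : ℝ} {x : E}

theorem scaledKernel_nonneg (hr : 0 ≤ r) (z : E) : 0 ≤ scaledKernel r z :=
  mul_nonneg (inv_nonneg.mpr (pow_nonneg hr _)) (meanKernel_nonneg _)

theorem scaledKernel_eq_zero (hr : 0 < r) {z : E} (hz : r ≤ ‖z‖) : scaledKernel r z = 0 := by
  rw [scaledKernel, meanKernel_eq_zero ((one_le_norm_inv_smul_iff hr).mpr hz), mul_zero]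

theorem contDiff_scaledKernel (r : ℝ) : ContDiff ℝ ∞ (scaledKernel r : E → ℝ) :=
  contDiff_const.mul (contDiff_meanKernel.comp (contDiff_const_smul _))

theorem hasCompactSupport_scaledKernel (hr : 0 < r) :
    HasCompactSupport (scaledKernel r : E → ℝ) :=
  .intro (isCompact_closedBall 0 r) fun _ hz =>
    scaledKernel_eq_zero hr (not_le.mp (mem_closedBall_zero_iff.not.mp hz)).le

theorem hasDerivAt_scaledKernel (hr : r ≠ 0) (z : E) :
    HasDerivAt (fun r => scaledKernel r z)
      ((r ^ (finrank ℝ E + 1))⁻¹ * Δ (kernelPotential : E → ℝ) (r⁻¹ • z)) r := by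
  have hscale : HasDerivAt (fun r : ℝ => r⁻¹ • z) (-(r ^ 2)⁻¹ • z) r :=
    (hasDerivAt_inv hr).smul_const z
  have hkernel := (contDiff_meanKernel.differentiable (by simp) (r⁻¹ • z)).hasFDerivAt
    |>.comp_hasDerivAt r hscale
  have hprod := ((hasDerivAt_pow (finrank ℝ E) r).inv (pow_ne_zero _ hr)).mul hkernel
  refine hprod.congr_deriv ?_
  simp only [laplacian_kernelPotential, Function.comp_apply, Pi.inv_apply, map_smul, smul_eq_mul]
  rcases finrank ℝ E with _ | n
  all_goals
    push_cast [Nat.add_sub_cancel]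
    field_simp
    ring

theorem scaledPotential_nonneg (x : E) (r : ℝ) (y : E) : 0 ≤ scaledPotential x r y :=
  kernelPotential_nonneg _

theorem isTestFunction_scaledPotential (hr : 0 < r) {V : Set E} (hV : closedBall x r ⊆ V) :
    IsTestFunction (scaledPotential x r) V := by
  have hzero : ∀ y, r ≤ dist y x → scaledPotential x r y = 0 := fun y hy => by
    rw [dist_eq_norm'] at hy
    simp [scaledPotential, kernelPotential,
      radialBump_eq_zero ((one_le_norm_inv_smul_iff hr).mpr hy)]
  have hsupp : tsupport (scaledPotential x r) ⊆ closedBall x r :=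
    closure_minimal (fun y hy => not_lt.mp fun h => hy (hzero y h.le)) isClosed_closedBall
  exact ⟨isTestFunction_kernelPotential.contDiff.comp
      (contDiff_const.smul (contDiff_const.sub contDiff_id)),
    (isCompact_closedBall x r).of_isClosed_subset (isClosed_tsupport _) hsupp, hsupp.trans hV⟩

theorem laplacian_scaledPotential (x : E) (r : ℝ) (y : E) :
    Δ (scaledPotential x r) y = r⁻¹ ^ 2 * Δ (kernelPotential : E → ℝ) (r⁻¹ • (x - y)) :=
  laplacian_comp_smul_sub isTestFunction_kernelPotential.contDiff_two r⁻¹ x y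

theorem integral_scaledPotential (x : E) (hr : 0 ≤ r) :
    ∫ y, scaledPotential x r y = r ^ finrank ℝ E * ∫ z : E, kernelPotential z := by
  simp only [scaledPotential]
  rw [integral_sub_left_eq_self (fun z => kernelPotential (r⁻¹ • z)) volume x,
    Measure.integral_comp_inv_smul, smul_eq_mul, abs_of_nonneg (by positivity)]

end RadialKernel
section KernelMean

variable [InnerProductSpace ℝ E] [FiniteDimensional ℝ E] [MeasurableSpace E] [BorelSpace E]
  {V : Set E} {w : E → ℝ} {x : E} {r A : ℝ}

/-- The smoothed mean of `w` over the ball of centre `x` and radius `r`. -/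
noncomputable def kernelMean (w : E → ℝ) (x : E) (r : ℝ) : ℝ :=
  ∫ y, w y * scaledKernel r (x - y)

theorem integrable_mul_scaledKernel (hw : Integrable w) (x : E) (hr : 0 < r) :
    Integrable fun y => w y * scaledKernel r (x - y) := by
  obtain ⟨C, hC⟩ := (hasCompactSupport_scaledKernel hr).exists_bound_of_continuous
    (contDiff_scaledKernel (E := E) r).continuous
  have hcont : Continuous fun y => scaledKernel r (x - y) :=
    (contDiff_scaledKernel r).continuous.comp (by fun_prop)
  exact hw.mul_bdd hcont.aestronglyMeasurable (.of_forall fun y => hC (x - y))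

theorem hasDerivAt_kernelMean (hw : Integrable w) (x : E) (hr : 0 < r) :
    HasDerivAt (kernelMean w x)
      (r * (r ^ finrank ℝ E)⁻¹ * ∫ y, w y * Δ (scaledPotential x r) y) r := by
  set L : E → ℝ := Δ (kernelPotential : E → ℝ)
  have hL : Continuous L := isTestFunction_kernelPotential.continuous_laplacian
  obtain ⟨C, hC⟩ := (isTestFunction_kernelPotential (E := E)).hasCompactSupport_laplacian
    |>.exists_bound_of_continuous hL
  have hpos : ∀ s ∈ Ioi (r / 2), 0 < s := fun s hs => (half_pos hr).trans hs
  have hderiv := hasDerivAt_integral_of_dominated_loc_of_deriv_le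
    (F := fun s y => w y * scaledKernel s (x - y))
    (F' := fun s y => w y * ((s ^ (finrank ℝ E + 1))⁻¹ * L (s⁻¹ • (x - y))))
    (bound := fun y => ‖w y‖ * (((r / 2) ^ (finrank ℝ E + 1))⁻¹ * C))
    (Ioi_mem_nhds (half_lt_self hr))
    ((lt_mem_nhds hr).mono fun s hs => (integrable_mul_scaledKernel hw x hs).aestronglyMeasurable)
    (integrable_mul_scaledKernel hw x hr)
    (hw.aestronglyMeasurable.mul (by fun_prop : Continuous _).aestronglyMeasurable)
    (.of_forall fun y s hs => ?_) (hw.norm.mul_const _)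
    (.of_forall fun y s hs => (hasDerivAt_scaledKernel (hpos s hs).ne' (x - y)).const_mul (w y))
  · refine hderiv.2.congr_deriv ?_
    rw [← integral_const_mul]
    refine integral_congr_ae (.of_forall fun y => ?_)
    simp only [laplacian_scaledPotential, L]
    field_simp
    ring
  · have hs0 := hpos s hs
    rw [norm_mul, norm_mul, norm_inv, norm_pow, Real.norm_of_nonneg hs0.le]
    have : (s ^ (finrank ℝ E + 1))⁻¹ ≤ ((r / 2) ^ (finrank ℝ E + 1))⁻¹ := by
      have := hs.out.le
      gcongr
    gcongr
    exact hC _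

theorem tendsto_kernelMean (hw : Integrable w) (hwx : ContinuousAt w x) :
    Tendsto (kernelMean w x) (𝓝[>] 0) (𝓝 (w x)) := by
  have hdecay : Tendsto (fun z : E => ‖z‖ ^ finrank ℝ E * meanKernel z)
      (Bornology.cobounded E) (𝓝 0) := by
    refine tendsto_const_nhds.congr' ?_
    filter_upwards [tendsto_norm_cobounded_atTop.eventually_ge_atTop 1] with z hz
    rw [meanKernel_eq_zero hz, mul_zero]
  refine ((tendsto_integral_comp_smul_smul_of_integrable' meanKernel_nonneg integral_meanKernel
    hdecay hw hwx).comp tendsto_inv_nhdsGT_zero).congr fun r => ?_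
  simp only [Function.comp_apply, kernelMean, scaledKernel, inv_pow, smul_eq_mul, mul_comm (w _)]

theorem kernelMean_neg (w : E → ℝ) (x : E) (r : ℝ) : kernelMean (-w) x r = -kernelMean w x r := by
  simp [kernelMean, integral_neg]

variable (E) in
/-- The constant of the one-sided mean value inequality `kernelMean_le`. -/
noncomputable def meanExcess : ℝ := (∫ z : E, kernelPotential z) / 2

variable (E) in
theorem meanExcess_nonneg : 0 ≤ meanExcess E :=
  div_nonneg (integral_nonneg kernelPotential_nonneg) zero_le_two

theorem kernelMean_le (hw : Integrable w) (hwx : ContinuousAt w x) (hr : 0 < r)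
    (hV : closedBall x r ⊆ V) (hA : DistribLaplacianLE w A V) :
    kernelMean w x r ≤ w x + A * meanExcess E * r ^ 2 := by
  set q : ℝ → ℝ := fun s => kernelMean w x s - A * meanExcess E * s ^ 2
  have hq (s) (hs : 0 < s) : HasDerivAt q (s * (s ^ finrank ℝ E)⁻¹ *
      (∫ y, w y * Δ (scaledPotential x s) y) - A * meanExcess E * (2 * s)) s := by
    simpa using (hasDerivAt_kernelMean hw x hs).fun_sub
      ((hasDerivAt_pow 2 s).const_mul (A * meanExcess E))
  have hq' (s) (hs : s ∈ Ioc 0 r) : deriv q s ≤ 0 := by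
    have htest := hA _ (isTestFunction_scaledPotential hs.1
      ((closedBall_subset_closedBall hs.2).trans hV)) (scaledPotential_nonneg x s)
    rw [integral_scaledPotential x hs.1.le] at htest
    rw [(hq s hs.1).deriv, sub_nonpos]
    have := hs.1
    calc s * (s ^ finrank ℝ E)⁻¹ * ∫ y, w y * Δ (scaledPotential x s) y
        ≤ s * (s ^ finrank ℝ E)⁻¹ * (A * (s ^ finrank ℝ E * ∫ z : E, kernelPotential z)) := by
          gcongr
      _ = A * meanExcess E * (2 * s) := by
          rw [meanExcess]
          field_simp
  have hanti : AntitoneOn q (Ioc 0 r) :=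
    antitoneOn_of_deriv_nonpos (convex_Ioc 0 r)
      (fun s hs => (hq s hs.1).continuousAt.continuousWithinAt)
      (fun s hs => (hq s (interior_subset hs).1).differentiableAt.differentiableWithinAt)
      fun s hs => hq' s (interior_subset hs)
  have hlim : Tendsto q (𝓝[>] 0) (𝓝 (w x)) := by
    have hsq : Tendsto (fun s : ℝ => A * meanExcess E * s ^ 2) (𝓝[>] 0) (𝓝 0) := by
      have : ContinuousAt (fun s : ℝ => A * meanExcess E * s ^ 2) 0 := by fun_prop
      simpa using this.tendsto.mono_left nhdsWithin_le_nhds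
    simpa using (tendsto_kernelMean hw hwx).sub hsq
  have hle : q r ≤ w x := ge_of_tendsto hlim <| by
    filter_upwards [Ioc_mem_nhdsGT hr] with s hs using hanti hs ⟨hr, le_rfl⟩ hs.2
  exact sub_le_iff_le_add.mp hle

theorem DistribHarmonic.kernelMean_eq (h : DistribHarmonic w V) (hw : Integrable w)
    (hwx : ContinuousAt w x) (hr : 0 < r) (hV : closedBall x r ⊆ V) : kernelMean w x r = w x := by
  have hle := kernelMean_le hw hwx hr hV h.distribLaplacianLE
  have hge := kernelMean_le hw.neg hwx.neg hr hV h.neg.distribLaplacianLE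
  rw [kernelMean_neg] at hge
  simp only [zero_mul, add_zero, Pi.neg_apply, neg_le_neg_iff] at hle hge
  exact hle.antisymm hge

theorem contDiff_kernelMean (hw : Integrable w) (hr : 0 < r) :
    ContDiff ℝ ∞ fun x => kernelMean w x r :=
  (hasCompactSupport_scaledKernel hr).contDiff_convolution_right (ContinuousLinearMap.mul ℝ ℝ)
    hw.locallyIntegrable (contDiff_scaledKernel r)

end KernelMean
section Weyl

variable [InnerProductSpace ℝ E] [FiniteDimensional ℝ E] [MeasurableSpace E] [BorelSpace E]
  {V : Set E} {w : E → ℝ}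

theorem DistribHarmonic.contDiffOn (h : DistribHarmonic w V) (hV : IsOpen V)
    (hw : ContinuousOn w V) : ContDiffOn ℝ ∞ w V := by
  intro p hp
  obtain ⟨r, hr, hrV⟩ := nhds_basis_closedBall.mem_iff.mp (hV.mem_nhds hp)
  set w' := (closedBall p r).indicator w
  have hw' : Integrable w' := ((hw.mono hrV).integrableOn_compact
    (isCompact_closedBall p r)).integrable_indicator measurableSet_closedBall
  have heq : EqOn w w' (ball p r) := fun y hy =>
    (indicator_of_mem (ball_subset_closedBall hy) w).symm
  have hcont' : ContinuousOn w' (ball p r) :=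
    (hw.mono (ball_subset_closedBall.trans hrV)).congr heq.symm
  have hharm' : DistribHarmonic w' (ball p r) :=
    (h.mono (ball_subset_closedBall.trans hrV)).congr heq
  refine ((contDiff_kernelMean hw' (half_pos hr)).contDiffAt.congr_of_eventuallyEq
    ?_).contDiffWithinAt
  filter_upwards [ball_mem_nhds p (half_pos hr)] with y hy
  have hyr : closedBall y (r / 2) ⊆ ball p r :=
    closedBall_subset_ball' (by linarith [mem_ball.mp hy])
  have hyp : y ∈ ball p r := hyr (mem_closedBall_self (half_pos hr).le)
  rw [heq hyp, hharm'.kernelMean_eq hw' (hcont'.continuousAt (isOpen_ball.mem_nhds hyp))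
    (half_pos hr) hyr]

theorem DistribHarmonic.harmonicOnNhd (h : DistribHarmonic w V) (hV : IsOpen V)
    (hw : ContinuousOn w V) : HarmonicOnNhd w V := by
  have hsmooth : ContDiffOn ℝ 2 w V := (h.contDiffOn hV hw).of_le (WithTop.coe_le_coe.mpr le_top)
  have hlap : ContinuousOn (Δ w) V := fun x hx =>
    (continuousAt_laplacian (hsmooth.contDiffAt (hV.mem_nhds hx))).continuousWithinAt
  have hae : ∀ᵐ x, x ∈ V → Δ w x = 0 :=
    hV.ae_eq_zero_of_integral_contDiff_smul_eq_zero (hlap.locallyIntegrableOn hV.measurableSet)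
      fun φ hφ hφc hφV => by
        simp only [smul_eq_mul, mul_comm (φ _)]
        have htest : IsTestFunction φ V := ⟨hφ, hφc, hφV⟩
        rw [← integral_mul_laplacian_eq hV hsmooth htest.contDiff_two hφc hφV]
        exact h φ htest
  have hzero : EqOn (Δ w) 0 V := Measure.eqOn_open_of_ae_eq
    ((ae_restrict_iff' hV.measurableSet).mpr hae) hV hlap continuousOn_const
  exact fun x hx =>
    ⟨hsmooth.contDiffAt (hV.mem_nhds hx), hzero.eventuallyEq_of_mem (hV.mem_nhds hx)⟩

theorem contDiffOn_of_harmonicOnNhd (hV : IsOpen V) (hw : HarmonicOnNhd w V) :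
    ContDiffOn ℝ ∞ w V :=
  (distribHarmonic_of_harmonicOnNhd hV hw).contDiffOn hV hw.continuousOn

end Weyl

section HarmonicEstimates

variable [InnerProductSpace ℝ E] [FiniteDimensional ℝ E] [MeasurableSpace E] [BorelSpace E]

theorem norm_integral_smul_comp_sub_le {F : Type*} [NormedAddCommGroup F] [NormedSpace ℝ F]
    {w : E → ℝ} (hw : Integrable w) (hw0 : 0 ≤ w) {K : E → F} {b r : ℝ} (hb : ∀ z, ‖K z‖ ≤ b)
    (hK : ∀ z, r < ‖z‖ → K z = 0) (x : E) :
    ‖∫ y, w y • K (x - y)‖ ≤ b * ∫ y in closedBall x r, w y := by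
  rw [← integral_const_mul, ← integral_indicator measurableSet_closedBall]
  refine norm_integral_le_of_norm_le ((hw.const_mul b).indicator measurableSet_closedBall)
    (.of_forall fun y => ?_)
  by_cases hy : y ∈ closedBall x r
  · rw [indicator_of_mem hy, norm_smul, Real.norm_of_nonneg (hw0 y), mul_comm]
    exact mul_le_mul_of_nonneg_right (hb _) (hw0 y)
  · rw [indicator_of_notMem hy, hK, smul_zero, norm_zero]
    rwa [← dist_eq_norm', ← not_le]

variable (E)

theorem exists_kernelMean_le_setIntegral :
    ∃ C ≥ 0, ∀ {w : E → ℝ}, Integrable w → 0 ≤ w → ∀ (x : E) {r : ℝ}, 0 < r →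
      kernelMean w x r ≤ C * (r ^ finrank ℝ E)⁻¹ * ∫ y in closedBall x r, w y := by
  obtain ⟨C, hC⟩ := hasCompactSupport_meanKernel.exists_bound_of_continuous
    (contDiff_meanKernel (E := E)).continuous
  refine ⟨C, (norm_nonneg _).trans (hC 0), fun {w} hw hw0 x r hr => ?_⟩
  refine (le_abs_self _).trans (norm_integral_smul_comp_sub_le hw hw0 (fun z => ?_)
    (fun z hz => scaledKernel_eq_zero hr hz.le) x)
  rw [scaledKernel, norm_mul, Real.norm_of_nonneg (by positivity), mul_comm]
  gcongr
  exact hC _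

theorem exists_setIntegral_le_kernelMean :
    ∃ C ≥ 0, ∀ {w : E → ℝ}, Integrable w → 0 ≤ w → ∀ (x : E) {r : ℝ}, 0 < r →
      ∫ y in closedBall x r, w y ≤ C * r ^ finrank ℝ E * kernelMean w x (3 / 2 * r) := by
  obtain ⟨c, hc, hle⟩ := exists_pos_le_meanKernel E (s := 2 / 3) (by norm_num)
  refine ⟨c⁻¹ * (3 / 2) ^ finrank ℝ E, by positivity, fun {w} hw hw0 x r hr => ?_⟩
  have hr' : 0 < 3 / 2 * r := by positivity
  have hkernel (y) (hy : y ∈ closedBall x r) :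
      c * ((3 / 2 * r) ^ finrank ℝ E)⁻¹ ≤ scaledKernel (3 / 2 * r) (x - y) := by
    rw [scaledKernel, mul_comm]
    gcongr
    refine hle _ ?_
    rw [mem_closedBall, dist_eq_norm'] at hy
    rw [norm_smul, norm_inv, Real.norm_of_nonneg hr'.le, inv_mul_le_iff₀ hr']
    linarith
  have hmean : c * ((3 / 2 * r) ^ finrank ℝ E)⁻¹ * ∫ y in closedBall x r, w y ≤
      kernelMean w x (3 / 2 * r) := by
    have hint := integrable_mul_scaledKernel hw x hr'
    rw [← integral_const_mul]
    refine (setIntegral_mono_on (hw.integrableOn.const_mul _) hint.integrableOn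
      measurableSet_closedBall fun y hy => ?_).trans (setIntegral_le_integral hint
        (.of_forall fun y => mul_nonneg (hw0 y) (scaledKernel_nonneg hr'.le _)))
    rw [mul_comm (w y)]
    exact mul_le_mul_of_nonneg_right (hkernel y hy) (hw0 y)
  calc ∫ y in closedBall x r, w y
      = c⁻¹ * (3 / 2) ^ finrank ℝ E * r ^ finrank ℝ E *
          (c * ((3 / 2 * r) ^ finrank ℝ E)⁻¹ * ∫ y in closedBall x r, w y) := by
        rw [mul_pow]; field_simp
    _ ≤ _ := by gcongr

theorem exists_norm_fderiv_kernelMean_le :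
    ∃ C ≥ 0, ∀ {w : E → ℝ}, Integrable w → 0 ≤ w → ∀ (x : E) {r : ℝ}, 0 < r →
      ‖fderiv ℝ (fun x => kernelMean w x r) x‖ ≤
        C * (r ^ (finrank ℝ E + 1))⁻¹ * ∫ y in closedBall x r, w y := by
  have hsupp : HasCompactSupport (fderiv ℝ (meanKernel : E → ℝ)) :=
    hasCompactSupport_meanKernel.fderiv ℝ
  obtain ⟨C, hC⟩ :=
    hsupp.exists_bound_of_continuous (contDiff_meanKernel.continuous_fderiv (by simp))
  refine ⟨C, (norm_nonneg _).trans (hC 0), fun {w} hw hw0 x r hr => ?_⟩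
  have hfderiv (z : E) : fderiv ℝ (scaledKernel r) z =
      (r ^ (finrank ℝ E + 1))⁻¹ • fderiv ℝ meanKernel (r⁻¹ • z) := by
    have hcomp : DifferentiableAt ℝ (fun z : E => meanKernel (r⁻¹ • z)) z :=
      (contDiff_meanKernel.comp (contDiff_const_smul _)).differentiable (by simp) z
    have hmul : HasFDerivAt (scaledKernel r) _ z := hcomp.hasFDerivAt.const_mul _
    rw [hmul.fderiv, fderiv_comp_smul, smul_smul, pow_succ, mul_inv]
  have hsmooth : ContDiff ℝ 1 (scaledKernel r : E → ℝ) :=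
    (contDiff_scaledKernel r).of_le (WithTop.coe_le_coe.mpr le_top)
  have hconv : HasFDerivAt (fun x => kernelMean w x r)
      (∫ y, w y • fderiv ℝ (scaledKernel r) (x - y)) x :=
    ((hasCompactSupport_scaledKernel hr).hasFDerivAt_convolution_right
      (ContinuousLinearMap.mul ℝ ℝ) hw.locallyIntegrable hsmooth x).congr_fderiv
        (integral_congr_ae (.of_forall fun y => by ext v; simp))
  rw [hconv.fderiv]
  refine norm_integral_smul_comp_sub_le hw hw0 (fun z => ?_) (fun z hz => ?_) x
  · rw [hfderiv, norm_smul, Real.norm_of_nonneg (by positivity), mul_comm]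
    gcongr
    exact hC _
  · have hzero : scaledKernel r =ᶠ[𝓝 z] 0 := by
      filter_upwards [(continuous_norm.tendsto z).eventually_const_le hz] with y hy
      exact scaledKernel_eq_zero hr hy
    rw [hzero.fderiv_eq, fderiv_zero, Pi.zero_apply]

theorem exists_norm_fderiv_le_of_harmonicOnNhd :
    ∃ C ≥ 0, ∀ {w : E → ℝ}, Integrable w → 0 ≤ w → ∀ {x : E} {d : ℝ}, 0 < d →
      HarmonicOnNhd w (ball x d) → ‖fderiv ℝ w x‖ ≤ C / d * w x := by
  obtain ⟨C₁, hC₁, hgrad⟩ := exists_norm_fderiv_kernelMean_le E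
  obtain ⟨C₂, hC₂, hint⟩ := exists_setIntegral_le_kernelMean E
  refine ⟨2 * C₁ * C₂, by positivity, fun {w} hw hw0 x d hd hharm => ?_⟩
  have hmean {y : E} {r : ℝ} (hr : 0 < r) (hy : closedBall y r ⊆ ball x d) :
      kernelMean w y r = w y := by
    have hyd : y ∈ ball x d := hy (mem_closedBall_self hr.le)
    exact (distribHarmonic_of_harmonicOnNhd isOpen_ball hharm).kernelMean_eq hw
      (hharm.continuousOn.continuousAt (isOpen_ball.mem_nhds hyd)) hr hy
  obtain ⟨r, rfl⟩ : ∃ r, d = 2 * r := ⟨d / 2, by ring⟩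
  have hr : 0 < r := by linarith
  have heq : w =ᶠ[𝓝 x] fun y => kernelMean w y r := by
    filter_upwards [ball_mem_nhds x (half_pos hr)] with y hy
    exact (hmean hr (closedBall_subset_ball' (by linarith [mem_ball.mp hy]))).symm
  calc ‖fderiv ℝ w x‖ = ‖fderiv ℝ (fun y => kernelMean w y r) x‖ := by rw [heq.fderiv_eq]
    _ ≤ C₁ * (r ^ (finrank ℝ E + 1))⁻¹ * ∫ y in closedBall x r, w y := hgrad hw hw0 x hr
    _ ≤ C₁ * (r ^ (finrank ℝ E + 1))⁻¹ *
          (C₂ * r ^ finrank ℝ E * kernelMean w x (3 / 2 * r)) := by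
        gcongr
        exact hint hw hw0 x hr
    _ = 2 * C₁ * C₂ / (2 * r) * w x := by
        rw [hmean (by positivity) (closedBall_subset_ball (by linarith))]
        field_simp
        ring

theorem exists_le_kernelMean_of_harmonicOnNhd :
    ∃ C ≥ 0, ∀ {w : E → ℝ}, Integrable w → 0 ≤ w → ∀ {x x₀ : E} {d : ℝ}, 0 < d →
      HarmonicOnNhd w (ball x d) → dist x x₀ ≤ d → w x ≤ C * kernelMean w x₀ (9 / 4 * d) := by
  obtain ⟨C₁, hC₁, hmean⟩ := exists_kernelMean_le_setIntegral E
  obtain ⟨C₂, hC₂, hint⟩ := exists_setIntegral_le_kernelMean E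
  refine ⟨C₁ * C₂ * 3 ^ finrank ℝ E, by positivity, fun {w} hw hw0 x x₀ d hd hharm hdist => ?_⟩
  obtain ⟨r, rfl⟩ : ∃ r, d = 2 * r := ⟨d / 2, by ring⟩
  have hr : 0 < r := by linarith
  calc w x = kernelMean w x r :=
        ((distribHarmonic_of_harmonicOnNhd isOpen_ball hharm).kernelMean_eq hw
          (hharm.continuousOn.continuousAt (ball_mem_nhds x hd)) hr
          (closedBall_subset_ball (by linarith))).symm
    _ ≤ C₁ * (r ^ finrank ℝ E)⁻¹ * ∫ y in closedBall x r, w y := hmean hw hw0 x hr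
    _ ≤ C₁ * (r ^ finrank ℝ E)⁻¹ * ∫ y in closedBall x₀ (3 * r), w y := by
        refine mul_le_mul_of_nonneg_left (setIntegral_mono_set hw.integrableOn (.of_forall hw0)
          (closedBall_subset_closedBall' ?_).eventuallyLE) (by positivity)
        linarith
    _ ≤ C₁ * (r ^ finrank ℝ E)⁻¹ *
          (C₂ * (3 * r) ^ finrank ℝ E * kernelMean w x₀ (3 / 2 * (3 * r))) := by
        gcongr
        exact hint hw hw0 x₀ (by positivity)
    _ = C₁ * C₂ * 3 ^ finrank ℝ E * kernelMean w x₀ (9 / 4 * (2 * r)) := by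
        rw [mul_pow, show 3 / 2 * (3 * r) = 9 / 4 * (2 * r) by ring]
        field_simp

end HarmonicEstimates
section GradientBound

theorem exists_ball_subset_and_dist_eq_of_not_ball_subset {X : Type*} [PseudoMetricSpace X]
    [ProperSpace X] {D : Set X} (hD : IsOpen D) {x : X} (hx : x ∈ D) {ρ : ℝ}
    (h : ¬ ball x ρ ⊆ D) :
    ∃ d > 0, d < ρ ∧ ball x d ⊆ D ∧ ∃ x₀ ∉ D, dist x x₀ = d := by
  obtain ⟨z, hz, hzD⟩ := not_subset.mp h
  obtain ⟨x₀, hx₀, hdist⟩ := hD.isClosed_compl.exists_infDist_eq_dist ⟨z, hzD⟩ x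
  refine ⟨dist x x₀, ?_, ?_, fun y hy => ?_, x₀, hx₀, rfl⟩
  · exact hdist ▸ (hD.isClosed_compl.notMem_iff_infDist_pos ⟨z, hzD⟩).mp (notMem_compl_iff.mpr hx)
  · exact hdist ▸ (infDist_le_dist_of_mem hzD).trans_lt (mem_ball'.mp hz)
  · rw [← hdist, mem_ball'] at hy
    exact notMem_compl_iff.mp (notMem_of_dist_lt_infDist hy)

variable [InnerProductSpace ℝ E] [FiniteDimensional ℝ E] [MeasurableSpace E] [BorelSpace E]

variable (E)

theorem exists_le_mul_sq_of_touching_zero :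
    ∃ C ≥ 0, ∀ {w : E → ℝ}, Integrable w → 0 ≤ w → ∀ {A d : ℝ} {x x₀ : E}, 0 < d →
      HarmonicOnNhd w (ball x d) → dist x x₀ ≤ d → w x₀ = 0 → ContinuousAt w x₀ →
      DistribLaplacianLE w A (closedBall x₀ (9 / 4 * d)) → w x ≤ C * A * d ^ 2 := by
  obtain ⟨C, hC, hmean⟩ := exists_le_kernelMean_of_harmonicOnNhd E
  refine ⟨C * meanExcess E * (9 / 4) ^ 2,
    mul_nonneg (mul_nonneg hC (meanExcess_nonneg E)) (by positivity),
    fun {w} hw hw0 {A d x x₀} hd hharm hdist hx₀ hcont hdistrib => ?_⟩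
  calc w x ≤ C * kernelMean w x₀ (9 / 4 * d) := hmean hw hw0 hd hharm hdist
    _ ≤ C * (w x₀ + A * meanExcess E * (9 / 4 * d) ^ 2) := by
        gcongr
        exact kernelMean_le hw hcont (by positivity) subset_rfl hdistrib
    _ = _ := by rw [hx₀]; ring

theorem exists_norm_fderiv_sq_le_of_integrable :
    ∃ C ≥ 0, ∀ {w : E → ℝ}, Integrable w → 0 ≤ w → ∀ {A ρ : ℝ} {x : E}, 0 ≤ A → 0 < ρ →
      ContinuousOn w (ball x (4 * ρ)) → DistribLaplacianLE w A (ball x (4 * ρ)) →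
      HarmonicOnNhd w {y ∈ ball x (4 * ρ) | 0 < w y} → 0 < w x →
      ‖fderiv ℝ w x‖ ^ 2 ≤ C * (A + w x / ρ ^ 2) * w x := by
  obtain ⟨C₁, -, hgrad⟩ := exists_norm_fderiv_le_of_harmonicOnNhd E
  obtain ⟨C₂, hC₂, htouch⟩ := exists_le_mul_sq_of_touching_zero E
  refine ⟨C₁ ^ 2 * (1 + C₂), by positivity,
    fun {w} hw hw0 {A ρ x} hA hρ hcont hdistrib hharm hx => ?_⟩
  set D := {y ∈ ball x (4 * ρ) | 0 < w y}
  have hD : IsOpen D := hcont.isOpen_inter_preimage isOpen_ball isOpen_Ioi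
  suffices hscale : ∃ d > 0, ball x d ⊆ D ∧ w x / d ^ 2 ≤ (1 + C₂) * (A + w x / ρ ^ 2) by
    obtain ⟨d, hd, hsub, hle⟩ := hscale
    calc ‖fderiv ℝ w x‖ ^ 2 ≤ (C₁ / d * w x) ^ 2 := by
          gcongr
          exact hgrad hw hw0 hd (hharm.mono hsub)
      _ = C₁ ^ 2 * (w x / d ^ 2) * w x := by ring
      _ ≤ C₁ ^ 2 * ((1 + C₂) * (A + w x / ρ ^ 2)) * w x := by gcongr
      _ = _ := by ring
  have hwρ : 0 ≤ w x / ρ ^ 2 := by positivity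
  by_cases hball : ball x ρ ⊆ D
  · exact ⟨ρ, hρ, hball, by linarith [mul_nonneg hC₂ (add_nonneg hA hwρ)]⟩
  obtain ⟨d, hd, hdρ, hsub, x₀, hx₀, hdist⟩ := exists_ball_subset_and_dist_eq_of_not_ball_subset
    hD ⟨mem_ball_self (by positivity), hx⟩ hball
  have hx₀ball : x₀ ∈ ball x (4 * ρ) := by rw [mem_ball', hdist]; linarith
  have hzero : w x₀ = 0 := le_antisymm (not_lt.mp fun h => hx₀ ⟨hx₀ball, h⟩) (hw0 x₀)
  have hle : w x ≤ C₂ * A * d ^ 2 := htouch hw hw0 hd (hharm.mono hsub) hdist.le hzero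
    (hcont.continuousAt (isOpen_ball.mem_nhds hx₀ball))
    (hdistrib.mono le_rfl (closedBall_subset_ball' (by rw [dist_comm]; linarith)))
  refine ⟨d, hd, hsub, ?_⟩
  rw [div_le_iff₀ (by positivity)]
  nlinarith [mul_nonneg (add_nonneg hA (mul_nonneg (add_nonneg zero_le_one hC₂) hwρ)) (sq_nonneg d)]

theorem exists_norm_fderiv_sq_le :
    ∃ C ≥ 0, ∀ {w : E → ℝ} {V : Set E} {A ρ : ℝ} {x : E}, ContinuousOn w V →
      (∀ y ∈ V, 0 ≤ w y) → 0 ≤ A → 0 < ρ → closedBall x (4 * ρ) ⊆ V →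
      DistribLaplacianLE w A V → HarmonicOnNhd w {y ∈ V | 0 < w y} → 0 < w x →
      ‖fderiv ℝ w x‖ ^ 2 ≤ C * (A + w x / ρ ^ 2) * w x := by
  obtain ⟨C, hC, hbound⟩ := exists_norm_fderiv_sq_le_of_integrable E
  refine ⟨C, hC, fun {w V A ρ x} hw hw0 hA hρ hsub hdistrib hharm hx => ?_⟩
  set w' := (closedBall x (4 * ρ)).indicator w
  have hball : ball x (4 * ρ) ⊆ V := ball_subset_closedBall.trans hsub
  have hcongr : EqOn w w' (ball x (4 * ρ)) := fun y hy =>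
    (indicator_of_mem (ball_subset_closedBall hy) w).symm
  have hw' : Integrable w' := ((hw.mono hsub).integrableOn_compact
    (isCompact_closedBall x _)).integrable_indicator measurableSet_closedBall
  have hx' : x ∈ ball x (4 * ρ) := mem_ball_self (by positivity)
  have hharm' : HarmonicOnNhd w' {y ∈ ball x (4 * ρ) | 0 < w' y} := fun y ⟨hy, hpos⟩ =>
    (harmonicAt_congr_nhds (hcongr.eventuallyEq_of_mem (isOpen_ball.mem_nhds hy))).mp
      (hharm y ⟨hball hy, hcongr hy ▸ hpos⟩)
  have := hbound hw' (indicator_nonneg fun y hy => hw0 y (hsub hy)) hA hρ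
    ((hw.mono hball).congr hcongr.symm) ((hdistrib.mono le_rfl hball).congr hcongr) hharm'
    (hcongr hx' ▸ hx)
  rwa [← hcongr hx', ← (hcongr.eventuallyEq_of_mem (isOpen_ball.mem_nhds hx')).fderiv_eq] at this

end GradientBound

section SmoothThreshold

/-- A smooth version of `t ↦ max t 0` which vanishes for `t ≤ ε` and is the identity for
`2 * ε ≤ t`, used to cut a nonnegative function off near its zero set. -/
noncomputable def smoothThreshold (ε t : ℝ) : ℝ := t * Real.smoothTransition (ε⁻¹ * t - 1)

variable {ε t : ℝ}

theorem contDiff_smoothThreshold (ε : ℝ) {n : ℕ∞} : ContDiff ℝ n (smoothThreshold ε) :=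
  contDiff_id.mul (Real.smoothTransition.contDiff.comp
    ((contDiff_const.mul contDiff_id).sub contDiff_const))

theorem smoothThreshold_eq_zero (hε : 0 < ε) (ht : t ≤ ε) : smoothThreshold ε t = 0 := by
  have : ε⁻¹ * t ≤ 1 := by rwa [inv_mul_le_iff₀ hε, mul_one]
  rw [smoothThreshold, Real.smoothTransition.zero_of_nonpos (by linarith), mul_zero]

theorem smoothThreshold_eq_self (hε : 0 < ε) (ht : 2 * ε ≤ t) : smoothThreshold ε t = t := by
  have : 2 ≤ ε⁻¹ * t := by rwa [le_inv_mul_iff₀ hε, mul_comm]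
  rw [smoothThreshold, Real.smoothTransition.one_of_one_le (by linarith), mul_one]

theorem abs_smoothThreshold_le (ε t : ℝ) : |smoothThreshold ε t| ≤ |t| := by
  rw [smoothThreshold, abs_mul, abs_of_nonneg (Real.smoothTransition.nonneg _)]
  exact mul_le_of_le_one_right (abs_nonneg t) (Real.smoothTransition.le_one _)

theorem deriv_deriv_smoothThreshold_eq_zero (hε : 0 < ε) (ht : t ∉ Icc ε (2 * ε)) :
    deriv (deriv (smoothThreshold ε)) t = 0 := by
  rcases lt_or_ge t ε with hlt | hge
  · have hzero : smoothThreshold ε =ᶠ[𝓝 t] fun _ => 0 := by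
      filter_upwards [Iio_mem_nhds hlt] with s hs using smoothThreshold_eq_zero hε hs.le
    simpa using hzero.deriv.deriv_eq
  · have hid : smoothThreshold ε =ᶠ[𝓝 t] id := by
      filter_upwards [Ioi_mem_nhds (not_le.mp fun h => ht ⟨hge, h⟩)] with s hs
        using smoothThreshold_eq_self hε (mem_Ioi.mp hs).le
    simpa using hid.deriv.deriv_eq

theorem tendsto_smoothThreshold (ht : 0 ≤ t) :
    Tendsto (fun ε => smoothThreshold ε t) (𝓝[>] 0) (𝓝 t) := by
  refine tendsto_nhds_of_eventually_eq ?_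
  rcases ht.eq_or_lt with rfl | hpos
  · filter_upwards [self_mem_nhdsWithin] with ε hε
    exact smoothThreshold_eq_zero hε (mem_Ioi.mp hε).le
  · filter_upwards [Ioo_mem_nhdsGT (half_pos hpos)] with ε hε
    exact smoothThreshold_eq_self hε.1 (by linarith [hε.2])

theorem tendsto_deriv_deriv_smoothThreshold (ht : 0 ≤ t) :
    Tendsto (fun ε => deriv (deriv (smoothThreshold ε)) t) (𝓝[>] 0) (𝓝 0) := by
  refine tendsto_nhds_of_eventually_eq ?_
  rcases ht.eq_or_lt with rfl | hpos
  · filter_upwards [self_mem_nhdsWithin] with ε hε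
    exact deriv_deriv_smoothThreshold_eq_zero hε fun h => h.1.not_gt hε
  · filter_upwards [Ioo_mem_nhdsGT (half_pos hpos)] with ε hε
    exact deriv_deriv_smoothThreshold_eq_zero hε.1 fun h => by linarith [hε.2, h.2]

theorem deriv_deriv_smoothThreshold (hε : ε ≠ 0) (t : ℝ) :
    deriv (deriv (smoothThreshold ε)) t = ε⁻¹ * deriv (deriv (smoothThreshold 1)) (ε⁻¹ * t) := by
  have hscale : smoothThreshold ε = fun t => ε * smoothThreshold 1 (ε⁻¹ * t) := by
    ext t
    simp only [smoothThreshold]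
    field_simp
  have hderiv : deriv (smoothThreshold ε) = fun t => deriv (smoothThreshold 1) (ε⁻¹ * t) := by
    ext t
    rw [hscale, deriv_const_mul_field, deriv_comp_mul_left, smul_eq_mul, mul_inv_cancel_left₀ hε]
  rw [hderiv, deriv_comp_mul_left, smul_eq_mul]

theorem exists_abs_mul_deriv_deriv_smoothThreshold_le :
    ∃ C, ∀ ε > 0, ∀ t, |t * deriv (deriv (smoothThreshold ε)) t| ≤ C := by
  have hcont : Continuous fun s => s * deriv (deriv (smoothThreshold 1)) s :=
    continuous_id.mul ((contDiff_smoothThreshold 1 (n := 2)).iterate_deriv' 0 2).continuous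
  have hsupp : HasCompactSupport fun s => s * deriv (deriv (smoothThreshold 1)) s :=
    .intro isCompact_Icc fun s hs => by
      rw [deriv_deriv_smoothThreshold_eq_zero one_pos hs, mul_zero]
  obtain ⟨C, hC⟩ := hsupp.exists_bound_of_continuous hcont
  refine ⟨C, fun ε hε t => ?_⟩
  rw [deriv_deriv_smoothThreshold hε.ne', ← mul_assoc, mul_comm t]
  exact hC _

end SmoothThreshold

section Removability

variable [InnerProductSpace ℝ E] [FiniteDimensional ℝ E] {V : Set E} {w : E → ℝ} {ε : ℝ}

theorem contDiffOn_smoothThreshold_comp (hV : IsOpen V) (hw : ContinuousOn w V)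
    (hharm : HarmonicOnNhd w {x ∈ V | 0 < w x}) (hε : 0 < ε) :
    ContDiffOn ℝ 2 (smoothThreshold ε ∘ w) V := by
  intro x hx
  refine ContDiffAt.contDiffWithinAt ?_
  rcases lt_or_ge (w x) ε with hlt | hge
  · have hzero : smoothThreshold ε ∘ w =ᶠ[𝓝 x] fun _ => 0 := by
      filter_upwards [(hw.continuousAt (hV.mem_nhds hx)).eventually_lt_const hlt] with y hy
        using smoothThreshold_eq_zero hε hy.le
    exact contDiffAt_const.congr_of_eventuallyEq hzero
  · exact (contDiff_smoothThreshold ε (n := 2)).contDiffAt.comp x (hharm x ⟨hx, hε.trans_le hge⟩).1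

theorem laplacian_smoothThreshold_comp (hV : IsOpen V) (hw : ContinuousOn w V)
    (hharm : HarmonicOnNhd w {x ∈ V | 0 < w x}) (hε : 0 < ε) {x : E} (hx : x ∈ V) :
    Δ (smoothThreshold ε ∘ w) x =
      deriv (deriv (smoothThreshold ε)) (w x) * ‖fderiv ℝ w x‖ ^ 2 := by
  rcases lt_or_ge (w x) ε with hlt | hge
  · have hzero : smoothThreshold ε ∘ w =ᶠ[𝓝 x] fun _ => 0 := by
      filter_upwards [(hw.continuousAt (hV.mem_nhds hx)).eventually_lt_const hlt] with y hy
        using smoothThreshold_eq_zero hε hy.le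
    rw [(laplacian_congr_nhds hzero).self_of_nhds,
      deriv_deriv_smoothThreshold_eq_zero hε fun h => h.1.not_gt hlt]
    simp
  · obtain ⟨hsmooth, hzero⟩ := hharm x ⟨hx, hε.trans_le hge⟩
    rw [laplacian_comp (contDiff_smoothThreshold ε (n := 2)).contDiffAt hsmooth,
      hzero.self_of_nhds, Pi.zero_apply, mul_zero, add_zero]

theorem norm_laplacian_smoothThreshold_comp_le (hV : IsOpen V) (hw : ContinuousOn w V)
    (hw0 : ∀ x ∈ V, 0 ≤ w x) (hharm : HarmonicOnNhd w {x ∈ V | 0 < w x}) {C K : ℝ} {x : E}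
    (hgrad : 0 < w x → ‖fderiv ℝ w x‖ ^ 2 ≤ K * w x)
    (hC : ∀ t, |t * deriv (deriv (smoothThreshold ε)) t| ≤ C) (hε : 0 < ε) (hx : x ∈ V) :
    ‖Δ (smoothThreshold ε ∘ w) x‖ ≤ C * |K| := by
  rw [laplacian_smoothThreshold_comp hV hw hharm hε hx]
  rcases (hw0 x hx).eq_or_lt with hzero | hpos
  · rw [← hzero, deriv_deriv_smoothThreshold_eq_zero hε fun h => h.1.not_gt hε, zero_mul, norm_zero]
    exact mul_nonneg ((abs_nonneg _).trans (hC 0)) (abs_nonneg K)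
  calc ‖deriv (deriv (smoothThreshold ε)) (w x) * ‖fderiv ℝ w x‖ ^ 2‖
      ≤ |deriv (deriv (smoothThreshold ε)) (w x)| * (|K| * w x) := by
        rw [norm_mul, norm_pow, norm_norm, Real.norm_eq_abs]
        gcongr
        exact (hgrad hpos).trans (mul_le_mul_of_nonneg_right (le_abs_self K) hpos.le)
    _ = |w x * deriv (deriv (smoothThreshold ε)) (w x)| * |K| := by
        rw [abs_mul, abs_of_pos hpos]
        ring
    _ ≤ C * |K| := by
        gcongr
        exact hC _

variable [MeasurableSpace E] [BorelSpace E] {φ : E → ℝ}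

theorem tendsto_integral_smoothThreshold_comp_mul_laplacian (hV : IsOpen V)
    (hw : ContinuousOn w V) (hw0 : ∀ x ∈ V, 0 ≤ w x) (hφ : IsTestFunction φ V) :
    Tendsto (fun ε => ∫ x, (smoothThreshold ε ∘ w) x * Δ φ x) (𝓝[>] 0)
      (𝓝 (∫ x, w x * Δ φ x)) := by
  refine tendsto_integral_filter_of_dominated_convergence _
    (.of_forall fun ε => (hφ.integrable_mul_laplacian hV
      ((contDiff_smoothThreshold ε (n := 0)).continuous.comp_continuousOn hw)).aestronglyMeasurable)
    (.of_forall fun ε => .of_forall fun x => ?_) (hφ.integrable_mul_laplacian hV hw).norm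
    (.of_forall fun x => ?_)
  · rw [norm_mul, norm_mul]
    exact mul_le_mul_of_nonneg_right (abs_smoothThreshold_le ε _) (norm_nonneg _)
  · by_cases hx : x ∈ V
    · exact (tendsto_smoothThreshold (hw0 x hx)).mul_const _
    · simp [hφ.laplacian_eq_zero_of_notMem hx]

theorem tendsto_integral_laplacian_smoothThreshold_comp_mul (hV : IsOpen V)
    (hw : ContinuousOn w V) (hw0 : ∀ x ∈ V, 0 ≤ w x)
    (hharm : HarmonicOnNhd w {x ∈ V | 0 < w x}) {K : ℝ}
    (hgrad : ∀ x ∈ V, 0 < w x → ‖fderiv ℝ w x‖ ^ 2 ≤ K * w x) (hφ : IsTestFunction φ V) :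
    Tendsto (fun ε => ∫ x, Δ (smoothThreshold ε ∘ w) x * φ x) (𝓝[>] 0) (𝓝 0) := by
  obtain ⟨C, hbound⟩ := exists_abs_mul_deriv_deriv_smoothThreshold_le
  suffices h : Tendsto (fun ε => ∫ x, Δ (smoothThreshold ε ∘ w) x * φ x) (𝓝[>] 0)
      (𝓝 (∫ _ : E, (0 : ℝ))) by simpa only [integral_zero] using h
  refine tendsto_integral_filter_of_dominated_convergence (fun x => C * |K| * ‖φ x‖) ?_ ?_
    ((hφ.contDiff.continuous.integrable_of_hasCompactSupport hφ.hasCompactSupport).norm.const_mul _)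
    (.of_forall fun x => ?_)
  · filter_upwards [self_mem_nhdsWithin] with ε hε
    have hcont : ContinuousOn (Δ (smoothThreshold ε ∘ w)) V := fun x hx =>
      (continuousAt_laplacian ((contDiffOn_smoothThreshold_comp hV hw hharm hε).contDiffAt
        (hV.mem_nhds hx))).continuousWithinAt
    exact (hφ.integrable_mul hV hcont).aestronglyMeasurable
  · filter_upwards [self_mem_nhdsWithin] with ε hε
    refine .of_forall fun x => ?_
    by_cases hx : x ∈ V
    · rw [norm_mul]
      gcongr
      exact norm_laplacian_smoothThreshold_comp_le hV hw hw0 hharm (hgrad x hx) (hbound ε hε) hε hx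
    · simp [hφ.eq_zero_of_notMem hx]
  · by_cases hx : x ∈ V
    · have hlim := ((tendsto_deriv_deriv_smoothThreshold (hw0 x hx)).mul_const
        (‖fderiv ℝ w x‖ ^ 2)).mul_const (φ x)
      rw [zero_mul, zero_mul] at hlim
      refine hlim.congr' ?_
      filter_upwards [self_mem_nhdsWithin] with ε hε
      rw [laplacian_smoothThreshold_comp hV hw hharm hε hx]
    · simp [hφ.eq_zero_of_notMem hx]

theorem distribHarmonic_of_norm_fderiv_sq_le (hV : IsOpen V) (hw : ContinuousOn w V)
    (hw0 : ∀ x ∈ V, 0 ≤ w x) (hharm : HarmonicOnNhd w {x ∈ V | 0 < w x}) {K : ℝ}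
    (hgrad : ∀ x ∈ V, 0 < w x → ‖fderiv ℝ w x‖ ^ 2 ≤ K * w x) : DistribHarmonic w V := by
  intro φ hφ
  refine tendsto_nhds_unique
    (tendsto_integral_smoothThreshold_comp_mul_laplacian hV hw hw0 hφ)
    ((tendsto_integral_laplacian_smoothThreshold_comp_mul hV hw hw0 hharm hgrad hφ).congr' ?_)
  filter_upwards [self_mem_nhdsWithin] with ε hε
  exact (integral_mul_laplacian_eq hV (contDiffOn_smoothThreshold_comp hV hw hharm hε)
    hφ.contDiff_two hφ.hasCompactSupport hφ.tsupport_subset).symm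

end Removability

section HarmonicExtension

variable [InnerProductSpace ℝ E] [FiniteDimensional ℝ E] [MeasurableSpace E] [BorelSpace E]
  {V : Set E} {w : E → ℝ} {A : ℝ}

theorem harmonicOnNhd_of_harmonicOnNhd_pos (hV : IsOpen V) (hw : ContinuousOn w V)
    (hw0 : ∀ x ∈ V, 0 ≤ w x) (hharm : HarmonicOnNhd w {x ∈ V | 0 < w x})
    (hdistrib : DistribLaplacianLE w A V) : HarmonicOnNhd w V := by
  intro p hp
  obtain ⟨r, hr, hsub⟩ := nhds_basis_closedBall.mem_iff.mp (hV.mem_nhds hp)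
  obtain ⟨ρ, rfl⟩ : ∃ ρ, r = 5 * ρ := ⟨r / 5, by ring⟩
  have hρ : 0 < ρ := by linarith
  obtain ⟨M, hM⟩ := (isCompact_closedBall p (5 * ρ)).exists_bound_of_continuousOn (hw.mono hsub)
  obtain ⟨C, hC, hbound⟩ := exists_norm_fderiv_sq_le E
  have hball : ball p ρ ⊆ closedBall p (5 * ρ) :=
    (ball_subset_ball (by linarith)).trans ball_subset_closedBall
  have hgrad (x) (hx : x ∈ ball p ρ) (hpos : 0 < w x) :
      ‖fderiv ℝ w x‖ ^ 2 ≤ C * (max A 0 + M / ρ ^ 2) * w x := by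
    have hxsub : closedBall x (4 * ρ) ⊆ V :=
      (closedBall_subset_closedBall' (by linarith [mem_ball.mp hx])).trans hsub
    refine (hbound hw hw0 (le_max_right A 0) hρ hxsub
      (hdistrib.mono (le_max_left A 0) subset_rfl) hharm hpos).trans ?_
    gcongr
    exact (le_abs_self _).trans (hM x (hball hx))
  have hballV : ball p ρ ⊆ V := hball.trans hsub
  exact (distribHarmonic_of_norm_fderiv_sq_le isOpen_ball (hw.mono hballV)
    (fun x hx => hw0 x (hballV hx)) (hharm.mono fun x hx => ⟨hballV hx.1, hx.2⟩) hgrad)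
    |>.harmonicOnNhd isOpen_ball (hw.mono hballV) p (mem_ball_self hρ)

theorem harmonicOnNhd_interior_of_distribLaplacianLE_neg {Ω : Set E} {u : E → ℝ} {c : ℝ}
    (hΩ : IsOpen Ω) (hu : ContinuousOn u Ω) (hharm : HarmonicOnNhd u {x ∈ Ω | u x < c})
    (hdistrib : DistribLaplacianLE (-u) A Ω) :
    HarmonicOnNhd u (interior {x ∈ Ω | u x ≤ c}) := by
  have hsub : interior {x ∈ Ω | u x ≤ c} ⊆ {x ∈ Ω | u x ≤ c} := interior_subset
  have hgap : HarmonicOnNhd (fun x => c + (-u) x) (interior {x ∈ Ω | u x ≤ c}) :=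
    harmonicOnNhd_of_harmonicOnNhd_pos isOpen_interior
      (continuousOn_const.add (hu.mono fun x hx => (hsub hx).1).neg)
      (fun x hx => by simpa using (hsub hx).2)
      (fun x hx => (harmonicAt_const c).add (hharm x ⟨(hsub hx.1).1, by simpa using hx.2⟩).neg)
      ((hdistrib.const_add hΩ hu.neg c).mono le_rfl fun x hx => (hsub hx).1)
  intro x hx
  simpa [Pi.sub_def] using (harmonicAt_const c).sub (hgap x hx)

end HarmonicExtension

section EuclideanSpace

variable {N : ℕ} {Ω : Set (EuclideanSpace ℝ (Fin N))} {u : EuclideanSpace ℝ (Fin N) → ℝ} {A c : ℝ}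

theorem harmonicOnNhd_of_lap_eq_zero (hΩ : IsOpen Ω) (hu : ContDiffOn ℝ 2 u Ω)
    (hlap : ∀ x ∈ Ω, lap u x = 0) : HarmonicOnNhd u Ω := fun x hx => by
  refine ⟨hu.contDiffAt (hΩ.mem_nhds hx), ?_⟩
  filter_upwards [hΩ.mem_nhds hx] with y hy
  rw [← lap_eq_laplacian (hu.contDiffAt (hΩ.mem_nhds hy)), hlap y hy, Pi.zero_apply]

theorem distribLaplacianLE_neg_of_setIntegral_lap
    (hdistrib : ∀ φ, IsTestFunction φ Ω → (∀ x, 0 ≤ φ x) →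
      -(∫ x in Ω, u x * lap φ x) ≤ A * ∫ x in Ω, φ x) :
    DistribLaplacianLE (-u) A Ω := fun φ hφ hφ0 => by
  have h := hdistrib φ hφ hφ0
  simp only [lap_eq_laplacian hφ.contDiff_two.contDiffAt] at h
  rw [setIntegral_eq_integral_of_forall_compl_eq_zero fun x hx => hφ.eq_zero_of_notMem hx,
    setIntegral_eq_integral_of_forall_compl_eq_zero fun x hx => by
      rw [hφ.laplacian_eq_zero_of_notMem hx, mul_zero]] at h
  simpa [integral_neg] using h

theorem stmt_14_general (hΩ : IsOpen Ω) (hu : ContinuousOn u Ω)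
    (hharm : ContDiffOn ℝ 2 u {x ∈ Ω | u x < c} ∧ ∀ x ∈ {x ∈ Ω | u x < c}, lap u x = 0)
    (hdistrib : ∀ φ : EuclideanSpace ℝ (Fin N) → ℝ, ContDiff ℝ ∞ φ →
      HasCompactSupport φ → tsupport φ ⊆ Ω → (∀ x, 0 ≤ φ x) →
      -(∫ x in Ω, u x * lap φ x) ≤ A * ∫ x in Ω, φ x) :
    ContDiffOn ℝ ∞ u (interior {x ∈ Ω | u x ≤ c}) ∧
      ∀ x ∈ interior {x ∈ Ω | u x ≤ c}, lap u x = 0 := by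
  have hbelow : HarmonicOnNhd u {x ∈ Ω | u x < c} := harmonicOnNhd_of_lap_eq_zero
    (hu.isOpen_inter_preimage hΩ isOpen_Iio) hharm.1 hharm.2
  have hinterior : HarmonicOnNhd u (interior {x ∈ Ω | u x ≤ c}) :=
    harmonicOnNhd_interior_of_distribLaplacianLE_neg hΩ hu hbelow
      (distribLaplacianLE_neg_of_setIntegral_lap fun φ ⟨hφ, hφc, hφΩ⟩ => hdistrib φ hφ hφc hφΩ)
  refine ⟨contDiffOn_of_harmonicOnNhd isOpen_interior hinterior, fun x hx => ?_⟩
  rw [lap_eq_laplacian (hinterior x hx).1, (hinterior x hx).2.self_of_nhds, Pi.zero_apply]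

end EuclideanSpace

theorem stmt_14 {N : ℕ} (hN : 2 ≤ N) (Ω : Set (EuclideanSpace ℝ (Fin N)))
    (hΩo : IsOpen Ω) (A₀ : ℝ) (hA₀ : 0 ≤ A₀)
    (u : EuclideanSpace ℝ (Fin N) → ℝ)
    (hloclip : ∀ x ∈ Ω, ∃ s ∈ nhds x, ∃ L : NNReal, LipschitzOnWith L u s)
    (hharm : ContDiffOn ℝ 2 u {x ∈ Ω | u x < 1}
      ∧ ∀ x ∈ {x ∈ Ω | u x < 1}, lap u x = 0)
    (hdistrib : ∀ φ : EuclideanSpace ℝ (Fin N) → ℝ, ContDiff ℝ (⊤ : ℕ∞) φ →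
      HasCompactSupport φ → tsupport φ ⊆ Ω → (∀ x, 0 ≤ φ x) →
      -(∫ x in Ω, u x * lap φ x) ≤ A₀ * ∫ x in Ω, φ x) :
    ContDiffOn ℝ (⊤ : ℕ∞) u (interior {x ∈ Ω | u x ≤ 1})
      ∧ ∀ x ∈ interior {x ∈ Ω | u x ≤ 1}, lap u x = 0 := by
  exact stmt_14_general hΩo (fun x hx => let ⟨_, hs, _, hL⟩ := hloclip x hx
    (hL.continuousOn.continuousAt hs).continuousWithinAt) hharm hdistrib
end

section
/- Let N ≥ 2, let Ω ⊂ ℝ^N be a bounded open connected set, let p > 2, let ε > 0, and let β : ℝ → ℝ be a continuous function with β(s) ≥ 0 for all s and β(s) = 0 for s ≤ 0. Let u be continuous on the closure of Ω, twice continuously differentiable on Ω, with u = 0 on ∂Ω and Δu(x) = (1/ε)β((u(x)−1)/ε) − (u(x)−1)_+^{p−1} for all x ∈ Ω. If u(x) ≤ 1 for all x ∈ Ω, then u is identically zero on Ω. In particular, every nontrivial such solution satisfies u(x₀) > 1 for some x₀ ∈ Ω. -/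
open MeasureTheory Metric Set

/-!
Where `u ≤ 1` the right-hand side of the equation vanishes, so `u` is harmonic, and the weak maximum
principle applied to `u` and `-u` gives `u = 0`. The maximum principle comes from the second
derivative test: a `C²` function has `Δ f ≤ 0` at an interior maximum, which rules out interior
maxima when `Δ f > 0`; the case `Δ f ≥ 0` follows by perturbing `f` to `f + δ ‖·‖²` and letting
`δ → 0`.
-/

open Bornology Filter InnerProductSpace Laplacian Topology

section SecondDerivativeTest

theorem deriv_deriv_nonpos_of_isLocalMax {f : ℝ → ℝ} {a : ℝ} (h : IsLocalMax f a)
    (hc : ContinuousAt f a) : deriv (deriv f) a ≤ 0 := by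
  by_contra! hpos
  have hmin : IsLocalMin f a := isLocalMin_of_deriv_deriv_pos hpos h.deriv_eq_zero hc
  have hconst : f =ᶠ[𝓝 a] fun _ ↦ f a := by
    filter_upwards [h, hmin] with y hle hge using le_antisymm hle hge
  have hzero : deriv (deriv f) a = 0 := by
    rw [hconst.deriv.deriv_eq]
    simp
  exact hpos.ne' hzero

theorem deriv_deriv_comp_add_smul {𝕜 E F : Type*} [NontriviallyNormedField 𝕜]
    [NormedAddCommGroup E] [NormedSpace 𝕜 E] [NormedAddCommGroup F] [NormedSpace 𝕜 F] {f : E → F}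
    {x : E} (hf : ContDiffAt 𝕜 2 f x) (v : E) :
    deriv (deriv fun t : 𝕜 ↦ f (x + t • v)) 0 = iteratedFDeriv 𝕜 2 f x fun _ ↦ v := by
  have hline : Tendsto (fun t : 𝕜 ↦ x + t • v) (𝓝 0) (𝓝 x) :=
    Continuous.tendsto' (by fun_prop) _ _ (by simp)
  have hfirst : deriv (fun t : 𝕜 ↦ f (x + t • v)) =ᶠ[𝓝 0]
      fun t ↦ iteratedFDeriv 𝕜 1 f (x + t • v) fun _ ↦ v := by
    filter_upwards [hline.eventually (hf.eventually (by simp))] with t ht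
    rw [(ht.differentiableAt two_ne_zero).deriv_comp_add_smul, iteratedFDeriv_one_apply]
  rw [hfirst.deriv_eq, ContDiffAt.deriv_fderiv_add_smul (by simpa [one_add_one_eq_two] using hf)]
  simp

theorem iteratedFDeriv_two_nonpos_of_isLocalMax {E : Type*} [NormedAddCommGroup E]
    [NormedSpace ℝ E] {f : E → ℝ} {x : E} (h : IsLocalMax f x) (hf : ContDiffAt ℝ 2 f x) (v : E) :
    iteratedFDeriv ℝ 2 f x (fun _ ↦ v) ≤ 0 := by
  have hline : ContinuousAt (fun t : ℝ ↦ x + t • v) 0 := by fun_prop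
  have hx : x + (0 : ℝ) • v = x := by simp
  rw [← deriv_deriv_comp_add_smul hf v]
  refine deriv_deriv_nonpos_of_isLocalMax ?_ (hf.continuousAt.comp_of_eq hline hx)
  exact IsLocalMax.comp_continuous (g := fun t : ℝ ↦ x + t • v) (by rwa [hx]) hline

end SecondDerivativeTest

section MaximumPrinciple

variable {E : Type*} [NormedAddCommGroup E] [InnerProductSpace ℝ E] [FiniteDimensional ℝ E]

theorem laplacian_nonpos_of_isLocalMax {f : E → ℝ} {x : E} (h : IsLocalMax f x)
    (hf : ContDiffAt ℝ 2 f x) : Δ f x ≤ 0 := by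
  rw [laplacian_eq_iteratedFDeriv_stdOrthonormalBasis]
  refine Finset.sum_nonpos fun i _ ↦ ?_
  simpa [iteratedFDeriv_two_apply] using!
    iteratedFDeriv_two_nonpos_of_isLocalMax h hf (stdOrthonormalBasis ℝ E i)

theorem laplacian_norm_sq (x : E) :
    Δ (fun y : E ↦ ‖y‖ ^ 2) x = 2 * Module.finrank ℝ E := by
  have hhess : fderiv ℝ (fderiv ℝ fun y : E ↦ ‖y‖ ^ 2) x = 2 • innerSL ℝ := by
    rw [fderiv_norm_sq]
    exact (2 • innerSL ℝ : E →L[ℝ] E →L[ℝ] ℝ).fderiv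
  have hhess_apply (v : E) : fderiv ℝ (fderiv ℝ fun y : E ↦ ‖y‖ ^ 2) x v v = 2 * ‖v‖ ^ 2 := by
    rw [hhess, ← real_inner_self_eq_norm_sq, two_smul, two_mul]
    rfl
  simp [laplacian_eq_iteratedFDeriv_stdOrthonormalBasis, iteratedFDeriv_two_apply, hhess_apply,
    mul_comm]

theorem laplacian_add_smul_norm_sq {f : E → ℝ} {x : E} (hf : ContDiffAt ℝ 2 f x) (δ : ℝ) :
    Δ (f + δ • fun y : E ↦ ‖y‖ ^ 2) x = Δ f x + δ * (2 * Module.finrank ℝ E) := by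
  have hq : ContDiffAt ℝ 2 (fun y : E ↦ ‖y‖ ^ 2) x := (contDiff_norm_sq ℝ).contDiffAt
  have hδq : ContDiffAt ℝ 2 (δ • fun y : E ↦ ‖y‖ ^ 2) x := hq.const_smul δ
  rw [hf.laplacian_add hδq, laplacian_smul δ hq, laplacian_norm_sq, smul_eq_mul]

theorem exists_mem_frontier_isMaxOn_of_laplacian_pos {f : E → ℝ} {s : Set E} (hs : IsBounded s)
    (hne : s.Nonempty) (hc : ContinuousOn f (closure s))
    (hf : ∀ x ∈ interior s, ContDiffAt ℝ 2 f x) (hΔ : ∀ x ∈ interior s, 0 < Δ f x) :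
    ∃ z ∈ frontier s, IsMaxOn f (closure s) z := by
  obtain ⟨z, hz, hmax⟩ := hs.isCompact_closure.exists_isMaxOn hne.closure hc
  refine ⟨z, ⟨hz, fun hzi ↦ ?_⟩, hmax⟩
  have hloc : IsLocalMax f z :=
    hmax.isLocalMax (mem_of_superset (mem_interior_iff_mem_nhds.mp hzi) subset_closure)
  exact (laplacian_nonpos_of_isLocalMax hloc (hf z hzi)).not_gt (hΔ z hzi)

variable [Nontrivial E]

theorem le_of_forall_mem_frontier_le_of_laplacian_nonneg {f : E → ℝ} {s : Set E} {C : ℝ}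
    (hs : IsBounded s) (hc : ContinuousOn f (closure s))
    (hf : ∀ x ∈ interior s, ContDiffAt ℝ 2 f x) (hΔ : ∀ x ∈ interior s, 0 ≤ Δ f x)
    (hC : ∀ x ∈ frontier s, f x ≤ C) {x : E} (hx : x ∈ closure s) : f x ≤ C := by
  obtain ⟨R, hR⟩ := hs.closure.exists_norm_le
  have hperturbed : ∀ δ > 0, f x ≤ C + δ * R ^ 2 := by
    intro δ hδ
    have hq : ContDiff ℝ 2 (δ • fun y : E ↦ ‖y‖ ^ 2) := (contDiff_norm_sq ℝ).const_smul δ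
    have hΔpos : ∀ y ∈ interior s, 0 < Δ (f + δ • fun z : E ↦ ‖z‖ ^ 2) y := by
      intro y hy
      have hdim : (0 : ℝ) < Module.finrank ℝ E := mod_cast Module.finrank_pos
      rw [laplacian_add_smul_norm_sq (hf y hy)]
      exact add_pos_of_nonneg_of_pos (hΔ y hy) (by positivity)
    obtain ⟨z, hz, hmax⟩ := exists_mem_frontier_isMaxOn_of_laplacian_pos hs
      (closure_nonempty_iff.mp ⟨x, hx⟩) (hc.add hq.continuous.continuousOn)
      (fun y hy ↦ (hf y hy).add hq.contDiffAt) hΔpos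
    calc
      f x ≤ f x + δ * ‖x‖ ^ 2 := le_add_of_nonneg_right (by positivity)
      _ ≤ f z + δ * ‖z‖ ^ 2 := hmax hx
      _ ≤ C + δ * R ^ 2 := by
        gcongr
        exacts [hC z hz, hR z (frontier_subset_closure hz)]
  have hlim : Tendsto (fun δ : ℝ ↦ C + δ * R ^ 2) (𝓝[>] 0) (𝓝 C) :=
    (Continuous.tendsto' (by fun_prop) _ _ (by simp)).mono_left nhdsWithin_le_nhds
  exact ge_of_tendsto hlim (eventually_mem_nhdsWithin.mono hperturbed)

theorem le_of_forall_mem_frontier_le_of_harmonicContOnCl {f : E → ℝ} {s : Set E} {C : ℝ}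
    (hs : IsBounded s) (hf : HarmonicContOnCl f s) (hC : ∀ x ∈ frontier s, f x ≤ C) {x : E}
    (hx : x ∈ closure s) : f x ≤ C :=
  le_of_forall_mem_frontier_le_of_laplacian_nonneg hs hf.continuousOn
    (fun _ hy ↦ hf.contDiffAt (interior_subset hy))
    (fun y hy ↦ (hf.harmonicOnNhd y (interior_subset hy)).2.self_of_nhds.ge) hC hx

theorem eqOn_closure_of_eqOn_frontier_of_harmonicContOnCl {f g : E → ℝ} {s : Set E}
    (hs : IsBounded s) (hf : HarmonicContOnCl f s) (hg : HarmonicContOnCl g s)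
    (hfg : EqOn f g (frontier s)) : EqOn f g (closure s) := by
  intro x hx
  apply le_antisymm <;> rw [← sub_nonpos]
  · exact le_of_forall_mem_frontier_le_of_harmonicContOnCl hs (hf.sub hg)
      (fun y hy ↦ (sub_eq_zero.mpr (hfg hy)).le) hx
  · exact le_of_forall_mem_frontier_le_of_harmonicContOnCl hs (hg.sub hf)
      (fun y hy ↦ (sub_eq_zero.mpr (hfg hy).symm).le) hx

end MaximumPrinciple

theorem laplacian_eq_lap {N : ℕ} {u : EuclideanSpace ℝ (Fin N) → ℝ} {x : EuclideanSpace ℝ (Fin N)}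
    (hu : ContDiffAt ℝ 2 u x) : Δ u x = lap u x := by
  have hdiff : DifferentiableAt ℝ (fderiv ℝ u) x :=
    (hu.fderiv_right (m := 1) (by norm_num)).differentiableAt one_ne_zero
  simp [laplacian_eq_iteratedFDeriv_orthonormalBasis u (EuclideanSpace.basisFun (Fin N) ℝ),
    iteratedFDeriv_two_apply, lap, fderiv_clm_apply hdiff]

theorem penalized_reaction_eq_zero_of_le_one {β : ℝ → ℝ} (hβ : ∀ s ≤ (0 : ℝ), β s = 0) {ε p : ℝ}
    (hε : 0 < ε) (hp : 1 < p) {s : ℝ} (hs : s ≤ 1) :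
    (1 / ε) * β ((s - 1) / ε) - (max (s - 1) 0) ^ (p - 1) = 0 := by
  have hs' : s - 1 ≤ 0 := sub_nonpos.mpr hs
  rw [hβ _ (div_nonpos_of_nonpos_of_nonneg hs' hε.le), max_eq_right hs',
    Real.zero_rpow (sub_pos.mpr hp).ne', mul_zero, sub_zero]

theorem stmt_16_general {E : Type*} [NormedAddCommGroup E] [InnerProductSpace ℝ E]
    [FiniteDimensional ℝ E] [Nontrivial E] {Ω : Set E} (hΩo : IsOpen Ω) (hΩb : IsBounded Ω)
    {g : ℝ → ℝ} {c : ℝ} (hg : ∀ s ≤ c, g s = 0) {u : E → ℝ} (huc : ContinuousOn u (closure Ω))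
    (huC2 : ContDiffOn ℝ 2 u Ω) (hbdry : ∀ x ∈ frontier Ω, u x = 0)
    (hueq : ∀ x ∈ Ω, Δ u x = g (u x)) :
    ((∀ x ∈ Ω, u x ≤ c) → ∀ x ∈ Ω, u x = 0) ∧ ((∃ x ∈ Ω, u x ≠ 0) → ∃ x₀ ∈ Ω, c < u x₀) := by
  have hzero : (∀ x ∈ Ω, u x ≤ c) → ∀ x ∈ Ω, u x = 0 := by
    intro hle x hx
    have hharm : HarmonicContOnCl u Ω := by
      refine ⟨fun y hy ↦ ⟨huC2.contDiffAt (hΩo.mem_nhds hy), ?_⟩, huc⟩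
      filter_upwards [hΩo.mem_nhds hy] with z hz
      exact (hueq z hz).trans (hg _ (hle z hz))
    exact eqOn_closure_of_eqOn_frontier_of_harmonicContOnCl hΩb hharm harmonicContOnCl_const hbdry
      (subset_closure hx)
  refine ⟨hzero, fun ⟨x, hx, hne⟩ ↦ ?_⟩
  by_contra! hle
  exact hne (hzero hle x hx)

theorem stmt_16 {N : ℕ} (hN : 2 ≤ N) (Ω : Set (EuclideanSpace ℝ (Fin N)))
    (hΩo : IsOpen Ω) (hΩb : Bornology.IsBounded Ω) (hΩc : IsConnected Ω)
    (p : ℝ) (hp : 2 < p) (ε : ℝ) (hε : 0 < ε)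
    (β : ℝ → ℝ) (hβc : Continuous β) (hβ0 : ∀ s, 0 ≤ β s)
    (hβneg : ∀ s ≤ (0 : ℝ), β s = 0)
    (u : EuclideanSpace ℝ (Fin N) → ℝ)
    (huc : ContinuousOn u (closure Ω)) (huC2 : ContDiffOn ℝ 2 u Ω)
    (hbdry : ∀ x ∈ frontier Ω, u x = 0)
    (hueq : ∀ x ∈ Ω, lap u x
      = (1 / ε) * β ((u x - 1) / ε) - (max (u x - 1) 0) ^ (p - 1)) :
    ((∀ x ∈ Ω, u x ≤ 1) → ∀ x ∈ Ω, u x = 0)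
      ∧ ((∃ x ∈ Ω, u x ≠ 0) → ∃ x₀ ∈ Ω, 1 < u x₀) := by
  have : NeZero N := ⟨by lia⟩
  exact stmt_16_general hΩo hΩb
    (g := fun s ↦ (1 / ε) * β ((s - 1) / ε) - (max (s - 1) 0) ^ (p - 1))
    (fun _ ↦ penalized_reaction_eq_zero_of_le_one hβneg hε (by linarith)) huc huC2 hbdry
    fun x hx ↦ (laplacian_eq_lap (huC2.contDiffAt (hΩo.mem_nhds hx))).trans (hueq x hx)
end
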